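/- arXiv:2402.11915 — 5 statements merged into one kernel-verified Lean document; each statement's English description precedes it below -/
import Mathlib

section
/- Let F be a field, K a field extension of F, n ≥ 1 and d ≥ 0 integers, δ ≥ 0, S a nonempty finite set, and H : S → F^n a function such that for every nonzero polynomial f ∈ F[x_1,…,x_n] of total degree at most d, the number of s ∈ S with f(H(s)) = 0 is at most δ·|S|. Then for every nonzero polynomial g ∈ K[x_1,…,x_n] of total degree at most d, the number of s ∈ S with g(ι(H(s))) = 0 is at most δ·|S|, where ι : F^n → K^n is the coordinatewise inclusion of F into K. -/
open MvPolynomial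

/-- **An HSG over a field `F` is also an HSG over any field extension `K` of `F`.**
If `H : S → F^n` is such that every nonzero `n`-variate polynomial over `F` of total
degree at most `d` vanishes on at most a `δ` fraction of the points `H(s)`, then the same
holds for every nonzero `n`-variate polynomial over `K` of total degree at most `d`,
evaluated at the coordinatewise inclusions of the points `H(s)` into `K`. -/
theorem hsg_extension_field
    (F K : Type) [Field F] [Field K] [Algebra F K]
    (n d : ℕ) (hn : 1 ≤ n) (δ : ℝ) (hδ : 0 ≤ δ)
    (S : Type) [Finite S] [Nonempty S] (H : S → Fin n → F)
    (hH : ∀ f : MvPolynomial (Fin n) F, f ≠ 0 → f.totalDegree ≤ d →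
      (Nat.card {s : S // eval (H s) f = 0} : ℝ) ≤ δ * (Nat.card S : ℝ)) :
    ∀ g : MvPolynomial (Fin n) K, g ≠ 0 → g.totalDegree ≤ d →
      (Nat.card {s : S // eval (fun i => algebraMap F K (H s i)) g = 0} : ℝ)
        ≤ δ * (Nat.card S : ℝ) := by
  classical
  intro g hg hdeg
  obtain ⟨m, hm⟩ := MvPolynomial.ne_zero_iff.mp hg
  obtain ⟨φ, hφ⟩ : ∃ φ : Module.Dual F K, φ (coeff m g) ≠ 0 := by
    by_contra h
    push Not at h
    exact hm ((Module.forall_dual_apply_eq_zero_iff F _).mp h)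
  let f : MvPolynomial (Fin n) F := ∑ k ∈ g.support, monomial k (φ (coeff k g))
  have hcoeff : ∀ k, coeff k f = φ (coeff k g) := by
    intro k
    simp only [f, coeff_sum, coeff_monomial, Finset.sum_ite_eq']
    split_ifs with h
    · rfl
    · rw [notMem_support_iff.mp h, map_zero]
  have hf0 : f ≠ 0 := MvPolynomial.ne_zero_iff.mpr ⟨m, by rw [hcoeff]; exact hφ⟩
  have hfd : f.totalDegree ≤ d := by
    refine le_trans (Finset.sup_mono ?_) hdeg
    intro k hk
    rw [mem_support_iff] at hk ⊢
    intro h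
    exact hk (by rw [hcoeff, h, map_zero])
  have heval : ∀ s, eval (H s) f = φ (eval (fun i => algebraMap F K (H s i)) g) := by
    intro s
    rw [eval_eq (f := g), map_sum]
    simp only [f, map_sum, eval_monomial]
    refine Finset.sum_congr rfl fun k _ => ?_
    simp only [Finsupp.prod, ← map_pow, ← map_prod]
    rw [mul_comm (coeff k g), ← Algebra.smul_def, map_smul, smul_eq_mul, mul_comm]
  refine le_trans ?_ (hH f hf0 hfd)
  have hle : Nat.card {s : S // eval (fun i => algebraMap F K (H s i)) g = 0}
      ≤ Nat.card {s : S // eval (H s) f = 0} :=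
    Nat.card_le_card_of_injective
      (Subtype.map id fun s hs => by
        change eval (H s) f = 0
        rw [heval, hs, map_zero])
      (Subtype.map_injective _ Function.injective_id)
  exact_mod_cast hle
end

section
/- Let q be a prime power, n ≥ 1, and let f ∈ 𝔽_q[x_1,…,x_n] be a non-constant polynomial that is indecomposable over 𝔽_q. Then f, viewed as a polynomial with coefficients in an algebraic closure 𝔽̄_q of 𝔽_q, is indecomposable over 𝔽̄_q. -/
open MvPolynomial

/-- A non-constant polynomial `f ∈ F[x₁,…,xₙ]` is *decomposable* over `F` if
`f = g(h)` for some univariate `g ∈ F[z]` with `deg g ≥ 2` and some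
`h ∈ F[x₁,…,xₙ]`. -/
def MvPolynomial.Decomposable {F : Type*} [CommSemiring F] {n : ℕ}
    (f : MvPolynomial (Fin n) F) : Prop :=
  ∃ (g : Polynomial F) (h : MvPolynomial (Fin n) F),
    2 ≤ g.natDegree ∧ f = Polynomial.aeval h g


theorem totalDegree_aeval_poly {F : Type*} [Field F] {n : ℕ} (h : MvPolynomial (Fin n) F)
    (g : Polynomial F) :
    (Polynomial.aeval h g).totalDegree = g.natDegree * h.totalDegree := by
  rcases Nat.eq_zero_or_pos h.totalDegree with h0 | hpos
  · rw [h0, mul_zero]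
    rw [totalDegree_eq_zero_iff_eq_C] at h0
    rw [h0]
    have : Polynomial.aeval (C (coeff 0 h) : MvPolynomial (Fin n) F) g
        = C (Polynomial.aeval (coeff 0 h) g) := by
      rw [← MvPolynomial.algebraMap_eq, Polynomial.aeval_algebraMap_apply]
    rw [this, totalDegree_C]
  · induction hk : g.natDegree generalizing g with
    | zero =>
      rw [Polynomial.natDegree_eq_zero] at hk
      obtain ⟨a, rfl⟩ := hk
      simp [MvPolynomial.algebraMap_eq]
    | succ k ih =>
      have hd : g.divX.natDegree = k := by rw [Polynomial.natDegree_divX_eq_natDegree_tsub_one, hk]; rfl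
      have ih' := ih _ hd
      have hne : Polynomial.aeval h g.divX ≠ 0 := by
        intro h0
        rw [h0, totalDegree_zero] at ih'
        rcases Nat.eq_zero_or_pos k with rfl | hk0
        · rw [Polynomial.eq_C_of_natDegree_eq_zero hd] at h0
          simp only [Polynomial.aeval_C, MvPolynomial.algebraMap_eq, C_eq_zero] at h0
          have : g.leadingCoeff = 0 := by
            rw [Polynomial.leadingCoeff, hk]; simpa [Polynomial.coeff_divX] using h0
          rw [Polynomial.leadingCoeff_eq_zero] at this
          simp [this] at hk
        · have := Nat.mul_pos hk0 hpos
          omega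
      have hh : h ≠ 0 := by rintro rfl; simp at hpos
      have e : Polynomial.aeval h g = Polynomial.aeval h g.divX * h + C (g.coeff 0) := by
        conv_lhs => rw [← Polynomial.divX_mul_X_add g]
        simp [MvPolynomial.algebraMap_eq]
      have e2 : (Polynomial.aeval h g.divX * h).totalDegree = (k+1) * h.totalDegree := by
        rw [totalDegree_mul_of_isDomain hne hh, ih']; ring
      rw [e, totalDegree_add_eq_left_of_totalDegree_lt, e2]
      rw [e2, totalDegree_C]; positivity

namespace Polynomial

/-- the substitution `t ↦ Y`, `X ↦ sY`. -/
noncomputable def homog (F : Type*) [Field F] : F[X][X] →+* F[X][X] :=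
  Polynomial.eval₂RingHom (Polynomial.mapRingHom (Polynomial.C : F →+* F[X])) (C X * X)

theorem homog_coeff {F : Type*} [Field F] (P : F[X][X]) (k j : ℕ) :
    ((homog F P).coeff k).coeff j = if j ≤ k then (P.coeff j).coeff (k - j) else 0 := by
  induction P using Polynomial.induction_on' with
  | add p q hp hq =>
    rw [map_add]; simp only [coeff_add, hp, hq]; split_ifs <;> simp
  | monomial i a =>
    have : homog F (monomial i a) = (Polynomial.map C a * C (X ^ i)) * X ^ i := by
      simp [homog, Polynomial.eval₂_monomial, mul_pow, mul_assoc]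
    rw [this, coeff_mul_X_pow']
    by_cases hij : i = j
    · subst hij
      split_ifs with h
      · rw [coeff_mul_C, coeff_map, coeff_C_mul]; simp
      · simp
    · have : (monomial i a).coeff j = 0 := by rw [coeff_monomial, if_neg hij]
      rw [this]
      split_ifs with h
      · rw [coeff_mul_C, coeff_map, coeff_C_mul, coeff_X_pow, if_neg (Ne.symm hij)]; simp
      · rw [coeff_mul_C, coeff_map, coeff_C_mul, coeff_X_pow, if_neg (Ne.symm hij)]; simp
      · simp
      · simp

theorem le_homog {F : Type*} [Field F] (P : F[X][X]) (hP : P.Monic) :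
    P.natDegree ≤ (homog F P).natDegree := by
  apply le_natDegree_of_ne_zero
  intro h
  have := homog_coeff P P.natDegree P.natDegree
  rw [h] at this
  simp [hP] at this

theorem coeff_degree_bound {F : Type*} [Field F] (M Q : F[X][X]) (hM : M.Monic) (hQ : Q.Monic)
    (hb : (homog F (M * Q)).natDegree ≤ (M * Q).natDegree) (j : ℕ) :
    (M.coeff j).natDegree ≤ M.natDegree := by
  have hM1 := le_homog M hM
  have hQ1 := le_homog Q hQ
  have h0 : homog F M ≠ 0 := by
    intro h
    have := homog_coeff M M.natDegree M.natDegree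
    rw [h] at this
    simp [hM] at this
  have h0' : homog F Q ≠ 0 := by
    intro h
    have := homog_coeff Q Q.natDegree Q.natDegree
    rw [h] at this
    simp [hQ] at this
  rw [map_mul, natDegree_mul h0 h0', hM.natDegree_mul hQ] at hb
  rw [natDegree_le_iff_coeff_eq_zero]
  intro N hN
  have := homog_coeff M (N + j) j
  rw [if_pos (by omega), coeff_eq_zero_of_natDegree_lt (p := homog F M) (by omega)] at this
  simpa using this.symm

theorem core {F A : Type*} [Field F] [CommRing A] [IsDomain A] [IsIntegrallyClosed A]
    [Algebra F A] (φ : A →ₐ[F] F[X]) (hφ : Function.Injective φ) (f : A)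
    (hf : 0 < (φ f).natDegree) : ∃ w : A, ∀ v : A, v ∈ Algebra.adjoin F {w} := by
  let _ : Algebra A F[X] := φ.toRingHom.toAlgebra
  have hmap : ∀ a : A, algebraMap A F[X] a = φ a := fun a => rfl
  have : IsScalarTower F A F[X] := IsScalarTower.of_algebraMap_eq (fun x => by
    rw [hmap, AlgHom.commutes])
  have : FaithfulSMul A F[X] := (faithfulSMul_iff_algebraMap_injective A F[X]).2 hφ
  have : Module.IsTorsionFree A F[X] := inferInstance
  -- the polynomial killing t
  set c := (φ f).leadingCoeff with hc
  have hc0 : c ≠ 0 := by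
    rw [hc]; intro h; rw [leadingCoeff_eq_zero] at h; simp [h] at hf
  set r : F[X] := C c⁻¹ * φ f with hr
  have hrm : r.Monic := by
    rw [hr, mul_comm]; exact monic_mul_leadingCoeff_inv (by intro h; simp [h] at hf)
  have hrd : 0 < r.natDegree := by
    rw [hr, natDegree_C_mul (inv_ne_zero hc0)]; exact hf
  set b : A := c⁻¹ • f
  have hb : φ b = r := by simp [b, hr, smul_eq_C_mul]
  set q : A[X] := r.map (algebraMap F A) - C b with hq
  have hqm : q.Monic := by
    apply (hrm.map _).sub_of_left
    rw [degree_map]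
    exact lt_of_le_of_lt degree_C_le (natDegree_pos_iff_degree_pos.1 hrd)
  have hq0 : aeval (X : F[X]) q = 0 := by
    rw [hq, map_sub, aeval_map_algebraMap, aeval_X_left_apply, aeval_C, hmap, hb, sub_self]
  have hint : IsIntegral A (X : F[X]) := ⟨q, hqm, by simpa [aeval_def] using hq0⟩
  set M := minpoly A (X : F[X]) with hM
  have hMm : M.Monic := minpoly.monic hint
  obtain ⟨Q, hQ⟩ := minpoly.isIntegrallyClosed_dvd hint hq0
  have hQm : Q.Monic := hMm.of_mul_monic_left (hQ ▸ hqm)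
  have hmp : M.map (algebraMap A F[X]) * Q.map (algebraMap A F[X])
      = r.map C - C r := by
    rw [← Polynomial.map_mul, ← hQ, hq, Polynomial.map_sub, Polynomial.map_C, hmap, hb,
      Polynomial.map_map, ← IsScalarTower.algebraMap_eq]
    rfl
  have hdeg : (r.map C - C r : F[X][X]).natDegree = r.natDegree := by
    rw [natDegree_sub_C, natDegree_map]
  have hbd := coeff_degree_bound (M.map (algebraMap A F[X])) (Q.map (algebraMap A F[X]))
    (hMm.map _) (hQm.map _) (by
      rw [hmp, hdeg, natDegree_le_iff_coeff_eq_zero]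
      intro N hN
      ext j
      rw [homog_coeff]
      split_ifs with h
      · rw [coeff_sub, coeff_map, coeff_sub, coeff_C, coeff_C]
        rcases Nat.eq_zero_or_pos j with rfl | hj
        · rw [if_neg (by omega), if_pos rfl]
          simp [coeff_eq_zero_of_natDegree_lt hN]
        · rw [if_neg (by omega : j ≠ 0)]
          split_ifs with h2
          · have : j = N := by omega
            simp [this, coeff_eq_zero_of_natDegree_lt hN]
          · simp
      · simp)
  have hnd : (M.map (algebraMap A F[X])).natDegree = M.natDegree := hMm.natDegree_map _
  simp only [coeff_map, hnd, hmap] at hbd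
  have hex : ∃ j, 0 < (φ (M.coeff j)).natDegree := by
    by_contra hcon
    push Not at hcon
    have hcon' : ∀ j, φ (M.coeff j) = C ((φ (M.coeff j)).coeff 0) := fun j =>
      eq_C_of_natDegree_eq_zero (Nat.le_zero.1 (hcon j))
    have h1 : aeval (X : F[X]) M = 0 := minpoly.aeval _ _
    rw [aeval_eq_sum_range] at h1
    have h2 := congrArg (fun p => coeff p M.natDegree) h1
    simp only [Algebra.smul_def, hmap] at h2
    rw [finsetSum_coeff, Finset.sum_eq_single M.natDegree] at h2
    · rw [hMm.coeff_natDegree] at h2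
      simp at h2
    · intro i hi hne
      rw [hcon' i, coeff_C_mul, coeff_X_pow, if_neg (Ne.symm hne), mul_zero]
    · simp
  obtain ⟨j, hj⟩ := hex
  set w := M.coeff j
  have hwm := hbd j
  refine ⟨w, fun v => ?_⟩
  have hMpos : 0 < M.natDegree := lt_of_lt_of_le hj hwm
  have key : ∀ (d : ℕ) (s : F[X]), s.natDegree ≤ d → ∃ N : A[X], N.degree < M.natDegree ∧
      aeval (X : F[X]) N = s ∧ ∀ i, N.coeff i ∈ Algebra.adjoin F {w} := by
    intro d
    induction d using Nat.strong_induction_on with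
    | _ d ih =>
      intro s hs
      by_cases hlt : s.degree < (M.natDegree : WithBot ℕ)
      · refine ⟨s.map (algebraMap F A), by rwa [degree_map], ?_, ?_⟩
        · rw [aeval_map_algebraMap, aeval_X_left_apply]
        · intro i; rw [coeff_map]; exact Subalgebra.algebraMap_mem _ _
      · have hw0 : φ w ≠ 0 := by intro h; simp [h] at hj
        have hs0 : s ≠ 0 := by rintro rfl; simp at hlt
        have hsd : M.natDegree ≤ s.natDegree := by
          rw [not_lt, degree_eq_natDegree hs0] at hlt; exact_mod_cast hlt
        obtain ⟨N, hN1, hN2, hN3⟩ := ih (s / φ w).natDegree (by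
          have h1 : (s / φ w).degree < s.degree :=
            degree_div_lt hs0 (natDegree_pos_iff_degree_pos.1 hj)
          rcases eq_or_ne (s / φ w) 0 with h0 | h0
          · rw [h0, natDegree_zero]; omega
          · have := natDegree_lt_natDegree h0 h1
            omega) (s / φ w) le_rfl
        refine ⟨C w * N + (s % φ w).map (algebraMap F A), ?_, ?_, ?_⟩
        · refine lt_of_le_of_lt (degree_add_le _ _) (max_lt ?_ ?_)
          · rwa [degree_C_mul (by intro h; rw [h, map_zero] at hw0; exact hw0 rfl)]
          · rw [degree_map]
            refine lt_of_lt_of_le (EuclideanDomain.mod_lt s hw0) ?_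
            exact degree_le_of_natDegree_le hwm
        · rw [map_add, map_mul, aeval_C, hmap, hN2, aeval_map_algebraMap, aeval_X_left_apply]
          exact EuclideanDomain.div_add_mod _ _
        · intro i
          rw [coeff_add, coeff_C_mul, coeff_map]
          exact add_mem (mul_mem (Algebra.self_mem_adjoin_singleton _ _) (hN3 i)) (Subalgebra.algebraMap_mem _ _)
  obtain ⟨N, hN1, hN2, hN3⟩ := key _ (φ v) le_rfl
  have hz : N - C v = 0 := by
    by_contra hne
    have := minpoly.IsIntegrallyClosed.degree_le_of_ne_zero hne
      (by rw [map_sub, hN2, aeval_C, hmap, sub_self] : aeval (X : F[X]) (N - C v) = 0)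
    rw [← hM, degree_eq_natDegree hMm.ne_zero] at this
    refine absurd this (not_le.2 (lt_of_le_of_lt (degree_sub_le _ _) (max_lt hN1 ?_)))
    exact lt_of_le_of_lt degree_C_le (by exact_mod_cast hMpos)
  have hv : N.coeff 0 = v := by
    rw [sub_eq_zero] at hz; rw [hz]; simp
  rw [← hv]; exact hN3 0

end Polynomial

theorem exists_subst {F : Type*} [Field F] {n : ℕ} (f : MvPolynomial (Fin n) F)
    (hf : 0 < f.totalDegree) :
    ∃ φ : MvPolynomial (Fin n) F →ₐ[F] Polynomial F, 0 < (φ f).natDegree := by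
  by_contra hcon
  push Not at hcon
  have key : MvPolynomial.map (Polynomial.C : F →+* Polynomial F) f
      = C (Polynomial.C (coeff 0 f)) := by
    apply MvPolynomial.funext_set
      (fun _ : Fin n => Set.range (fun p : Polynomial F => Polynomial.X * p))
    · intro i
      apply Set.infinite_range_of_injective
      intro a b hab
      exact mul_left_cancel₀ Polynomial.X_ne_zero hab
    · intro x hx
      rw [eval_map, eval_C]
      have h1 := hcon (MvPolynomial.aeval x)
      have h2 := Polynomial.eq_C_of_natDegree_eq_zero (Nat.le_zero.1 h1)
      have h3 : (MvPolynomial.aeval x f : Polynomial F)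
          = eval₂ (Polynomial.C : F →+* Polynomial F) x f := by
        rw [MvPolynomial.aeval_def]; rfl
      rw [← h3, h2]
      congr 1
      rw [h3, ← Polynomial.constantCoeff_apply, ← MvPolynomial.coe_eval₂Hom,
        ← RingHom.comp_apply, MvPolynomial.comp_eval₂Hom, ← MvPolynomial.constantCoeff_eq]
      have h4 : (fun i => Polynomial.constantCoeff (x i)) = (fun _ => (0 : F)) := by
        funext i
        obtain ⟨p, hp⟩ := hx i (Set.mem_univ i)
        simp [← hp]
      rw [h4]
      have h5 : (Polynomial.constantCoeff.comp (Polynomial.C : F →+* Polynomial F))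
          = RingHom.id F := by ext; simp
      rw [h5]
      exact MvPolynomial.eval₂Hom_zero'_apply _ _
  have h6 : f = C (coeff 0 f) := by
    apply MvPolynomial.map_injective (Polynomial.C : F →+* Polynomial F) Polynomial.C_injective
    rw [key, map_C]
  rw [h6, totalDegree_C] at hf
  exact lt_irrefl _ hf

theorem inj_of_integral {S A B : Type*} [CommRing S] [Nontrivial S] [CommRing A] [IsDomain A]
    [CommRing B] [Algebra S A] [Algebra.IsIntegral S A] (ψ : A →+* B)
    (h : ∀ s : S, ψ (algebraMap S A s) = 0 → s = 0) : Function.Injective ψ := by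
  rw [RingHom.injective_iff_ker_eq_bot]
  apply Ideal.eq_bot_of_comap_eq_bot (R := S)
  rw [eq_bot_iff]
  intro x hx
  exact h x hx

theorem decomp_of_integral {F : Type*} [Field F] {n : ℕ} (f u : MvPolynomial (Fin n) F)
    (hu : 0 < u.totalDegree) (huf : u.totalDegree < f.totalDegree)
    (hint : IsIntegral (Algebra.adjoin F {f}) u) : f.Decomposable := by
  obtain ⟨φ, hφ⟩ := exists_subst f (hu.trans huf)
  obtain ⟨S, hS⟩ : ∃ S, S = Algebra.adjoin F {f} := ⟨_, rfl⟩
  have hfS : f ∈ S := hS ▸ Algebra.self_mem_adjoin_singleton F f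
  replace hint : IsIntegral S u := by subst hS; exact hint
  let A := integralClosure S (MvPolynomial (Fin n) F)
  have hA : IsIntegrallyClosed A :=
    IsIntegrallyClosed.of_isIntegrallyClosed_of_isIntegrallyClosedIn _ (MvPolynomial (Fin n) F)
  let fA : A := ⟨f, isIntegral_algebraMap (R := S) (x := ⟨f, hfS⟩)⟩
  let uA : A := ⟨u, hint⟩
  let ψ : A →ₐ[F] Polynomial F := φ.comp (IsScalarTower.toAlgHom F A (MvPolynomial (Fin n) F))
  have hψ : ∀ a : A, ψ a = φ a := fun a => rfl
  have htr : ∀ p : Polynomial F, Polynomial.aeval (φ f) p = 0 → p = 0 := by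
    intro p hp
    change p.comp (φ f) = 0 at hp
    rw [Polynomial.comp_eq_zero_iff] at hp
    rcases hp with h | ⟨_, h⟩
    · exact h
    · rw [h] at hφ; simp at hφ
  have hinj : Function.Injective ψ := by
    refine inj_of_integral (S := S) (A := A) ψ.toRingHom ?_
    rintro ⟨x, hx⟩ hx0
    change φ x = 0 at hx0
    obtain ⟨p, rfl⟩ := Algebra.adjoin_mem_exists_aeval F f (hS ▸ hx)
    rw [← Polynomial.aeval_algHom_apply] at hx0
    have := htr p hx0
    subst this
    apply Subtype.ext
    simp
  obtain ⟨w, hw⟩ := Polynomial.core ψ hinj fA hφ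
  have hw' : ∀ v : A, ∃ p : Polynomial F, (v : MvPolynomial (Fin n) F)
      = Polynomial.aeval (w : MvPolynomial (Fin n) F) p := by
    intro v
    obtain ⟨p, hp⟩ := Algebra.adjoin_mem_exists_aeval F w (hw v)
    refine ⟨p, ?_⟩
    rw [← hp]
    exact (Polynomial.aeval_algHom_apply
      (IsScalarTower.toAlgHom F A (MvPolynomial (Fin n) F)) w p).symm
  obtain ⟨g, hg⟩ := hw' fA
  obtain ⟨g2, hg2⟩ := hw' uA
  refine ⟨g, w, ?_, hg⟩
  change f = _ at hg
  change u = _ at hg2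
  by_contra hlt
  have e1 := congrArg totalDegree hg
  have e2 := congrArg totalDegree hg2
  rw [totalDegree_aeval_poly] at e1 e2
  have hw1 : f.totalDegree ≤ (w : MvPolynomial (Fin n) F).totalDegree := by
    rw [e1]; exact (Nat.mul_le_mul_right _ (by omega : g.natDegree ≤ 1)).trans (by simp)
  have hg2p : 0 < g2.natDegree := by
    rcases Nat.eq_zero_or_pos g2.natDegree with h | h
    · rw [h, zero_mul] at e2; omega
    · exact h
  have := Nat.le_mul_of_pos_left (w : MvPolynomial (Fin n) F).totalDegree hg2p
  omega

theorem isIntegral_of_eval₂ {E R T : Type*} [Field E] [CommRing R] [Nontrivial R] [CommRing T] [Algebra R T]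
    (c : E →+* R) (g : Polynomial E) (hg : 0 < g.natDegree) (a : R) (h : T)
    (e : algebraMap R T a = Polynomial.eval₂ ((algebraMap R T).comp c) h g) :
    IsIntegral R h := by
  have hg0 : g ≠ 0 := by intro h0; rw [h0] at hg; simp at hg
  have hlc : g.leadingCoeff ≠ 0 := Polynomial.leadingCoeff_ne_zero.2 hg0
  have hg1 : (Polynomial.C g.leadingCoeff⁻¹ * g).Monic := by
    rw [mul_comm]; exact Polynomial.monic_mul_leadingCoeff_inv hg0
  have hg1d : 0 < (Polynomial.C g.leadingCoeff⁻¹ * g).natDegree := by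
    rwa [Polynomial.natDegree_C_mul (inv_ne_zero hlc)]
  refine ⟨(Polynomial.C g.leadingCoeff⁻¹ * g).map c
    - Polynomial.C (c g.leadingCoeff⁻¹ * a), ?_, ?_⟩
  · apply (hg1.map c).sub_of_left
    rw [hg1.degree_map]
    exact lt_of_le_of_lt Polynomial.degree_C_le (Polynomial.natDegree_pos_iff_degree_pos.1 hg1d)
  · rw [Polynomial.eval₂_sub, Polynomial.eval₂_map, Polynomial.eval₂_C, map_mul, e,
      Polynomial.eval₂_mul, Polynomial.eval₂_C]
    simp

/-- descent from a finite extension of finite fields -/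
theorem descent {F E : Type*} [Field F] [Field E] [Algebra F E] [FiniteDimensional F E]
    [IsGalois F E] {n : ℕ} (f : MvPolynomial (Fin n) F) (hf : 0 < f.totalDegree)
    (hd : (MvPolynomial.map (algebraMap F E) f).Decomposable) : f.Decomposable := by
  obtain ⟨g, h, hg, hfe⟩ := hd
  have htd : (MvPolynomial.map (algebraMap F E) f).totalDegree = f.totalDegree :=
    by
    unfold totalDegree
    rw [support_map_of_injective _ (algebraMap F E).injective]
  have hdeg : f.totalDegree = g.natDegree * h.totalDegree := by
    rw [← htd, hfe, totalDegree_aeval_poly]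
  have hhpos : 0 < h.totalDegree := by
    rcases Nat.eq_zero_or_pos h.totalDegree with h0 | h0
    · rw [h0] at hdeg; omega
    · exact h0
  have hhlt : h.totalDegree < f.totalDegree := by rw [hdeg]; nlinarith
  -- a nonconstant coefficient
  obtain ⟨α, hα, hα0⟩ : ∃ α, coeff α h ≠ 0 ∧ α ≠ 0 := by
    by_contra hcon
    push Not at hcon
    have : h = C (coeff 0 h) := by
      ext m
      rw [coeff_C]
      split_ifs with hm
      · rw [hm]
      · by_contra h1; exact hm (hcon m h1).symm
    rw [this, totalDegree_C] at hhpos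
    exact lt_irrefl _ hhpos
  obtain ⟨l, hl⟩ : ∃ l : E, Algebra.trace F E (l * coeff α h) ≠ 0 := by
    by_contra hcon
    push Not at hcon
    apply hα
    apply (traceForm_nondegenerate F E).1
    intro l
    rw [Algebra.traceForm_apply, mul_comm]
    exact hcon l
  let k : MvPolynomial (Fin n) E := C l * h
  let u : MvPolynomial (Fin n) F := ∑ m ∈ h.support, monomial m (Algebra.trace F E (l * coeff m h))
  have hucoeff : ∀ m, coeff m u = Algebra.trace F E (l * coeff m h) := by
    intro m
    simp only [u, coeff_sum, coeff_monomial]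
    rw [Finset.sum_ite_eq']
    split_ifs with hm
    · rfl
    · rw [notMem_support_iff] at hm; rw [hm]; simp
  have hule : u.totalDegree ≤ h.totalDegree := by
    apply Finset.sup_mono
    intro m hm
    rw [mem_support_iff, hucoeff] at hm
    rw [mem_support_iff]
    intro h0; rw [h0] at hm; simp at hm
  have hupos : 0 < u.totalDegree := by
    rcases Nat.eq_zero_or_pos u.totalDegree with h0 | h0
    · rw [totalDegree_eq_zero_iff_eq_C] at h0
      have := hucoeff α
      rw [h0, coeff_C, if_neg (Ne.symm hα0)] at this
      exact absurd this.symm hl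
    · exact h0
  refine decomp_of_integral f u hupos (lt_of_le_of_lt hule hhlt) ?_
  have humap : MvPolynomial.map (algebraMap F E) u
      = ∑ σ : E ≃ₐ[F] E, MvPolynomial.map (σ : E →+* E) k := by
    ext m
    rw [coeff_map, hucoeff, trace_eq_sum_automorphisms, coeff_sum]
    apply Finset.sum_congr rfl
    intro σ _
    simp [k, coeff_map, coeff_C_mul]
  let S := Algebra.adjoin F {f}
  let ι : MvPolynomial (Fin n) F →ₐ[F] MvPolynomial (Fin n) E := MvPolynomial.mapAlgHom (Algebra.ofId F E)
  have hι : ∀ p, ι p = MvPolynomial.map (algebraMap F E) p := fun p => rfl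
  let j : S →+* MvPolynomial (Fin n) E := ι.toRingHom.comp (algebraMap S (MvPolynomial (Fin n) F))
  let _ : Algebra S (MvPolynomial (Fin n) E) := j.toAlgebra
  have hj : ∀ s : S, algebraMap S (MvPolynomial (Fin n) E) s = ι s := fun s => rfl
  let ιS : MvPolynomial (Fin n) F →ₐ[S] MvPolynomial (Fin n) E :=
    { ι.toRingHom with commutes' := fun s => rfl }
  have hιinj : Function.Injective ιS :=
    MvPolynomial.map_injective (algebraMap F E) (algebraMap F E).injective
  rw [← isIntegral_algHom_iff ιS hιinj]
  change IsIntegral S (MvPolynomial.map (algebraMap F E) u)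
  rw [humap]
  apply IsIntegral.sum
  intro σ _
  let B := integralClosure S (MvPolynomial (Fin n) E)
  have hC : ∀ e : E, C e ∈ B := by
    intro e
    have h1 : IsIntegral F e := Algebra.IsIntegral.isIntegral e
    obtain ⟨p, hpm, hp⟩ := h1
    refine ⟨p.map (algebraMap F S), hpm.map _, ?_⟩
    rw [Polynomial.eval₂_map]
    have h2 : (algebraMap S (MvPolynomial (Fin n) E)).comp (algebraMap F S)
        = (C : E →+* MvPolynomial (Fin n) E).comp (algebraMap F E) := by
      ext1 x
      change ι (algebraMap F _ x) = _
      rw [AlgHom.commutes]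
      rfl
    rw [h2, ← Polynomial.hom_eval₂, hp, map_zero]
  have hfB : MvPolynomial.map (algebraMap F E) f ∈ B := by
    exact isIntegral_algebraMap (R := S) (x := ⟨f, Algebra.self_mem_adjoin_singleton _ _⟩)
  have hkσ : MvPolynomial.map (σ : E →+* E) k = C (σ l) * MvPolynomial.map (σ : E →+* E) h := by
    simp [k]
  rw [hkσ]
  change _ ∈ B
  refine mul_mem (hC _) ?_
  -- the equation for the conjugate of `h`
  have hfσ : MvPolynomial.map (algebraMap F E) f
      = Polynomial.aeval (MvPolynomial.map (σ : E →+* E) h) (g.map (σ : E →+* E)) := by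
    have h1 := congrArg (MvPolynomial.map (σ : E →+* E)) hfe
    rw [map_map] at h1
    have h2 : (σ : E →+* E).comp (algebraMap F E) = algebraMap F E := by
      ext x; simp
    rw [h2] at h1
    rw [h1, Polynomial.aeval_def, Polynomial.aeval_def, Polynomial.hom_eval₂,
      Polynomial.eval₂_map]
    congr 1
    ext x : 1
    simp [MvPolynomial.algebraMap_eq]
  set g' := g.map (σ : E →+* E)
  set h' := MvPolynomial.map (σ : E →+* E) h
  have hg' : 2 ≤ g'.natDegree := by simpa [g', Polynomial.natDegree_map] using hg
  have hintB : IsIntegral B h' := by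
    let c : E →+* B := (C : E →+* MvPolynomial (Fin n) E).codRestrict B hC
    exact isIntegral_of_eval₂ c g' (by omega) ⟨_, hfB⟩ h' hfσ
  exact (IsIntegrallyClosedIn.isIntegral_iff (R := B) (A := MvPolynomial (Fin n) E)).1 hintB |>.elim
    (fun y hy => hy ▸ y.2)

/-- **Indecomposability over `𝔽_q` implies indecomposability over `𝔽̄_q`.**
If a non-constant polynomial `f` over a finite field `F` (of prime-power size `q`) is
indecomposable over `F`, then `f`, viewed over an algebraic closure of `F`, is
indecomposable over that algebraic closure. -/
theorem indecomposable_over_algebraicClosure_of_indecomposable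
    (F : Type) [Field F] [Fintype F] (n : ℕ) (hn : 1 ≤ n)
    (f : MvPolynomial (Fin n) F) (hf : 0 < f.totalDegree)
    (hind : ¬ f.Decomposable) :
    ¬ (MvPolynomial.map (algebraMap F (AlgebraicClosure F)) f).Decomposable := by
  rintro ⟨g, h, hg, hfe⟩
  apply hind
  let K := AlgebraicClosure F
  let T : Set K := (g.coeffs : Set K) ∪ (h.coeffs : Set K)
  have hT : T.Finite := (Finset.finite_toSet _).union (Finset.finite_toSet _)
  let E := IntermediateField.adjoin F T
  have hfin : FiniteDimensional F E := by
    have := hT.to_subtype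
    exact IntermediateField.finiteDimensional_adjoin (fun x _ => Algebra.IsIntegral.isIntegral x)
  have hEfin : Finite E := Module.finite_of_finite F
  have hgal : IsGalois F E := inferInstance
  have hTE : T ⊆ E := IntermediateField.subset_adjoin F T
  obtain ⟨g', hg'⟩ : ∃ g' : Polynomial E, g'.map (algebraMap E K) = g := by
    have : g ∈ Polynomial.lifts (algebraMap E K) := by
      rw [Polynomial.lifts_iff_coeff_lifts]
      intro i
      by_cases h0 : g.coeff i = 0
      · exact ⟨0, by rw [h0, map_zero]⟩
      · exact ⟨⟨g.coeff i, hTE (Or.inl (Polynomial.coeff_mem_coeffs h0))⟩, rfl⟩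
    exact (Polynomial.mem_lifts _).1 this
  obtain ⟨h', hh'⟩ : ∃ h' : MvPolynomial (Fin n) E, MvPolynomial.map (algebraMap E K) h' = h := by
    have : h ∈ Set.range (MvPolynomial.map (σ := Fin n) (algebraMap E K)) := by
      rw [MvPolynomial.mem_range_map_iff_coeffs_subset]
      intro x hx
      exact ⟨⟨x, hTE (Or.inr hx)⟩, rfl⟩
    exact this
  refine descent (E := E) f hf ⟨g', h', ?_, ?_⟩
  · rw [← hg', Polynomial.natDegree_map] at hg; exact hg
  · apply MvPolynomial.map_injective (algebraMap E K) (algebraMap E K).injective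
    rw [map_map, ← IsScalarTower.algebraMap_eq, hfe, Polynomial.aeval_def, Polynomial.aeval_def,
      Polynomial.hom_eval₂, ← hg', Polynomial.eval₂_map, hh']
    congr 1
    ext x : 1
    simp [MvPolynomial.algebraMap_eq]
end

section
/- Let F be a field, n ≥ 1, and let f ∈ F[x_1,…,x_n] be a non-constant polynomial. Let t be a new variable, let F̄ be an algebraic closure of F, and let Ω be an algebraic closure of the rational function field F(t). Then f is indecomposable over F̄ if and only if f − t is an irreducible element of the polynomial ring Ω[x_1,…,x_n]. -/
open MvPolynomial

theorem inj_aux {A R S : Type*} [CommRing A] [CommRing R] [CommRing S] [IsDomain R] [Nontrivial A]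
    [Algebra A R] [Algebra.IsIntegral A R] (φ : R →+* S)
    (h : ∀ a : A, φ (algebraMap A R a) = 0 → a = 0) : Function.Injective φ := by
  rw [RingHom.injective_iff_ker_eq_bot]
  apply Ideal.eq_bot_of_comap_eq_bot (R := A)
  rw [eq_bot_iff]
  intro x hx
  exact h x hx

theorem lur_aux {K R : Type*} [Field K] [CommRing R] [IsDomain R] [IsIntegrallyClosed R]
    [Algebra K R] [Algebra R (Polynomial K)] [IsScalarTower K R (Polynomial K)]
    (hinj : Function.Injective (algebraMap R (Polynomial K)))
    (hs : IsIntegral R (Polynomial.X : Polynomial K)) :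
    ∃ h : R, ∀ r : R, ∃ P : Polynomial K, r = Polynomial.aeval h P := by
  have : Module.IsTorsionFree R (Polynomial K) := by
    have : FaithfulSMul R (Polynomial K) := (faithfulSMul_iff_algebraMap_injective _ _).2 hinj
    infer_instance
  set μ := minpoly R (Polynomial.X : Polynomial K) with hμ
  have hroot : Polynomial.aeval (Polynomial.X : Polynomial K) μ = 0 := minpoly.aeval _ _
  have hu0 : μ.coeff 0 ≠ 0 := by
    intro h0
    obtain ⟨w, hw⟩ := Polynomial.X_dvd_iff.2 h0
    have hw1 : w.Monic := by
      have := minpoly.monic hs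
      rw [← hμ, hw] at this
      exact Polynomial.Monic.of_mul_monic_left Polynomial.monic_X this
    have h1 : Polynomial.aeval (Polynomial.X : Polynomial K) w = 0 := by
      rw [hw, map_mul, Polynomial.aeval_X] at hroot
      exact (mul_eq_zero.1 hroot).resolve_left Polynomial.X_ne_zero
    have h2 := minpoly.isIntegrallyClosed_dvd hs h1
    rw [← hμ, hw] at h2
    have h3 := Polynomial.natDegree_le_of_dvd h2 hw1.ne_zero
    rw [Polynomial.natDegree_X_mul hw1.ne_zero] at h3
    omega
  have hdvd : (Polynomial.X : Polynomial K) ∣ algebraMap R (Polynomial K) (μ.coeff 0) := by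
    have h1 := Polynomial.X_mul_divX_add μ
    rw [← h1] at hroot
    simp only [map_add, map_mul, Polynomial.aeval_X, Polynomial.aeval_C] at hroot
    rw [add_comm, add_eq_zero_iff_eq_neg] at hroot
    rw [hroot]
    exact (dvd_mul_right _ _).neg_right
  have hu0' : algebraMap R (Polynomial K) (μ.coeff 0) ≠ 0 := by
    rwa [Ne, map_eq_zero_iff _ hinj]
  have hdeg : 1 ≤ (algebraMap R (Polynomial K) (μ.coeff 0)).natDegree := by
    simpa using Polynomial.natDegree_le_of_dvd hdvd hu0'
  refine ⟨μ.coeff 0, ?_⟩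
  suffices H : ∀ d : ℕ, ∀ r : R, (algebraMap R (Polynomial K) r).natDegree < d →
      ∃ P : Polynomial K, r = Polynomial.aeval (μ.coeff 0) P from
    fun r => H _ r (Nat.lt_succ_self _)
  intro d
  induction d with
  | zero => intro r hr; omega
  | succ d ih =>
    intro r hr
    set r' := algebraMap R (Polynomial K) r with hr'
    have h1 : Polynomial.aeval (Polynomial.X : Polynomial K)
        (r'.map (algebraMap K R) - Polynomial.C r) = 0 := by
      rw [map_sub, Polynomial.aeval_map_algebraMap, Polynomial.aeval_C]
      simp [hr']
    obtain ⟨ν, hν⟩ := minpoly.isIntegrallyClosed_dvd hs h1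
    have h2 := congrArg (fun p => Polynomial.coeff p 0) hν
    simp only [Polynomial.coeff_sub, Polynomial.coeff_map, Polynomial.coeff_C_zero,
      Polynomial.mul_coeff_zero, ← hμ] at h2
    have h3 : r = algebraMap K R (r'.coeff 0) - μ.coeff 0 * ν.coeff 0 := by
      rw [← h2]; ring
    by_cases hν0 : ν.coeff 0 = 0
    · refine ⟨Polynomial.C (r'.coeff 0), ?_⟩
      rw [Polynomial.aeval_C, h3.trans (by rw [hν0, mul_zero, sub_zero])]
    · have hν0' : algebraMap R (Polynomial K) (ν.coeff 0) ≠ 0 := by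
        rwa [Ne, map_eq_zero_iff _ hinj]
      obtain ⟨P, hP⟩ := ih (ν.coeff 0) (by
        have h4 : algebraMap R (Polynomial K) (μ.coeff 0) * algebraMap R (Polynomial K) (ν.coeff 0)
            = Polynomial.C (r'.coeff 0) - r' := by
          rw [← map_mul, ← h2, map_sub, ← IsScalarTower.algebraMap_apply]
          simp [hr', Polynomial.algebraMap_eq]
        have h5 := congrArg Polynomial.natDegree h4
        rw [Polynomial.natDegree_mul hu0' hν0'] at h5
        have h6 := Polynomial.natDegree_sub_le (Polynomial.C (r'.coeff 0)) r'
        rw [Polynomial.natDegree_C] at h6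
        omega)
      refine ⟨Polynomial.C (r'.coeff 0) - Polynomial.X * P, ?_⟩
      rw [map_sub, map_mul, Polynomial.aeval_X, Polynomial.aeval_C, ← hP]
      exact h3

theorem lur_aux' {K R : Type*} [Field K] [CommRing R] [IsDomain R] [IsIntegrallyClosed R]
    [Algebra K R] (φ : R →ₐ[K] Polynomial K) (hinj : Function.Injective φ)
    (f : R) (hf : 0 < (φ f).natDegree) :
    ∃ h : R, ∀ r : R, ∃ P : Polynomial K, r = Polynomial.aeval h P := by
  let _ : Algebra R (Polynomial K) := φ.toRingHom.toAlgebra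
  have hφ : ∀ r : R, algebraMap R (Polynomial K) r = φ r := fun r => rfl
  have : IsScalarTower K R (Polynomial K) := by
    apply IsScalarTower.of_algebraMap_eq
    intro x
    rw [hφ]
    exact (φ.commutes x).symm
  refine lur_aux hinj ?_
  have hne : (φ f).leadingCoeff ≠ 0 := by
    rw [Ne, Polynomial.leadingCoeff_eq_zero]
    rintro h; rw [h] at hf; simp at hf
  refine ⟨(Polynomial.C (φ f).leadingCoeff⁻¹ * φ f).map (algebraMap K R)
    - Polynomial.C (algebraMap K R (φ f).leadingCoeff⁻¹ * f), ?_, ?_⟩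
  · apply Polynomial.Monic.sub_of_left
    · apply Polynomial.Monic.map
      rw [Polynomial.Monic, Polynomial.leadingCoeff_mul, Polynomial.leadingCoeff_C,
        inv_mul_cancel₀ hne]
    · apply Polynomial.degree_C_le.trans_lt
      rw [Polynomial.degree_map_eq_of_injective (algebraMap K R).injective,
        Polynomial.degree_C_mul (inv_ne_zero hne)]
      exact Polynomial.natDegree_pos_iff_degree_pos.1 hf
  · rw [← Polynomial.aeval_def, map_sub, Polynomial.aeval_map_algebraMap, Polynomial.aeval_C,
      map_mul (algebraMap R (Polynomial K)), ← IsScalarTower.algebraMap_apply, hφ]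
    simp [Polynomial.algebraMap_eq]

theorem line_aux {K : Type*} [Field K] [Infinite K] {n : ℕ} (f : MvPolynomial (Fin n) K)
    (hf : 0 < f.totalDegree) :
    ∃ ψ : MvPolynomial (Fin n) K →ₐ[K] Polynomial K, 0 < (ψ f).natDegree := by
  by_contra! H
  have : f = C (eval 0 f) := by
    apply MvPolynomial.funext
    intro a
    have h1 := H (aeval (fun i => Polynomial.C (a i) * Polynomial.X))
    have h2 := Polynomial.eq_C_of_natDegree_le_zero h1
    have key : ∀ s : K, Polynomial.eval s (aeval (fun i => Polynomial.C (a i) * Polynomial.X) f)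
        = eval (fun i => a i * s) f := by
      intro s
      rw [← Polynomial.coe_aeval_eq_eval, ← MvPolynomial.coe_aeval_eq_eval]
      have := congrArg (fun g => g f) (MvPolynomial.comp_aeval
        (fun i => Polynomial.C (a i) * Polynomial.X) (Polynomial.aeval s))
      simpa using this
    have k1 := key 1
    have k0 := key 0
    rw [h2] at k1 k0
    simp only [Polynomial.eval_C, mul_one, mul_zero] at k1 k0
    rw [eval_C, ← k1, k0]; rfl
  rw [this] at hf
  simp at hf

theorem gordan_aux {K : Type*} [Field K] [Infinite K] {n : ℕ} (f : MvPolynomial (Fin n) K)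
    (hf : 0 < f.totalDegree) :
    ∃ h : MvPolynomial (Fin n) K, ∀ r, IsIntegral (Algebra.adjoin K {f}) r →
      ∃ P : Polynomial K, r = Polynomial.aeval h P := by
  obtain ⟨ψ, hψ⟩ := line_aux f hf
  set A := Algebra.adjoin K {f} with hA
  set R := integralClosure A (MvPolynomial (Fin n) K) with hR
  have hRic : IsIntegrallyClosed R :=
    .of_isIntegrallyClosed_of_isIntegrallyClosedIn _ (MvPolynomial (Fin n) K)
  let φ : R →ₐ[K] Polynomial K := ψ.comp (IsScalarTower.toAlgHom K R (MvPolynomial (Fin n) K))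
  have htr : ∀ P : Polynomial K, ψ (Polynomial.aeval f P) = 0 → P = 0 := by
    intro P hP
    rw [← Polynomial.aeval_algHom_apply] at hP
    have h1 : Polynomial.natDegree (P.comp (ψ f)) = _ := Polynomial.natDegree_comp
    by_contra hne
    have h2 : P.comp (ψ f) = 0 := by
      rw [← hP, Polynomial.comp_eq_aeval]
    rw [Polynomial.comp_eq_zero_iff] at h2
    rcases h2 with h2 | ⟨_, h2⟩
    · exact hne h2
    · rw [h2] at hψ; simp at hψ
  have hinj : Function.Injective φ := by
    let _ : Algebra A R := Subalgebra.algebra R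
    have : Algebra.IsIntegral A R := integralClosure.AlgebraIsIntegral
    refine inj_aux (A := A) (R := R) (S := Polynomial K) (φ : R →+* Polynomial K) ?_
    intro x hx
    obtain ⟨x, hxA⟩ := x
    have hxA' := hxA
    rw [hA, Algebra.adjoin_singleton_eq_range_aeval] at hxA'
    obtain ⟨P, rfl⟩ := hxA'
    have h1 : ψ (Polynomial.aeval f P) = 0 := hx
    have := htr P h1
    subst this
    apply Subtype.ext
    simp
  have hfA : f ∈ A := Algebra.subset_adjoin rfl
  let fR : R := ⟨f, isIntegral_algebraMap (x := (⟨f, hfA⟩ : A))⟩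
  obtain ⟨h, hh⟩ := lur_aux' φ hinj fR hψ
  refine ⟨h, fun r hr => ?_⟩
  obtain ⟨P, hP⟩ := hh ⟨r, hr⟩
  refine ⟨P, ?_⟩
  have := congrArg (algebraMap R (MvPolynomial (Fin n) K)) hP
  rw [← Polynomial.aeval_algebraMap_apply] at this
  exact this

/-- If `f` is indecomposable, `K[f]` is integrally closed in `K[x]`. -/
theorem indec_aux {K : Type*} [Field K] [Infinite K] {n : ℕ} (f : MvPolynomial (Fin n) K)
    (hf : 0 < f.totalDegree)
    (hd : ¬ ∃ (g : Polynomial K) (h : MvPolynomial (Fin n) K),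
      2 ≤ g.natDegree ∧ f = Polynomial.aeval h g)
    (r : MvPolynomial (Fin n) K) (hr : IsIntegral (Algebra.adjoin K {f}) r) :
    r ∈ Algebra.adjoin K {f} := by
  obtain ⟨h, hh⟩ := gordan_aux f hf
  obtain ⟨P, hP⟩ := hh r hr
  have hfA : f ∈ Algebra.adjoin K {f} := Algebra.subset_adjoin rfl
  obtain ⟨g, hg⟩ := hh f (isIntegral_algebraMap (x := (⟨f, hfA⟩ : Algebra.adjoin K {f})))
  have hg2 : g.natDegree ≤ 1 := by
    by_contra hcon
    exact hd ⟨g, h, by omega, hg⟩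
  obtain ⟨a, b, rfl⟩ := Polynomial.exists_eq_X_add_C_of_natDegree_le_one hg2
  have ha : a ≠ 0 := by
    rintro rfl
    rw [hg] at hf
    simp [MvPolynomial.algebraMap_eq] at hf
  have hhA : h ∈ Algebra.adjoin K {f} := by
    have : h = algebraMap K _ a⁻¹ * (f - algebraMap K _ b) := by
      rw [hg]
      simp only [map_add, map_mul, Polynomial.aeval_C, Polynomial.aeval_X, add_sub_cancel_right]
      rw [← mul_assoc, ← map_mul, inv_mul_cancel₀ ha, map_one, one_mul]
    rw [this]
    exact mul_mem (Subalgebra.algebraMap_mem _ _) (sub_mem hfA (Subalgebra.algebraMap_mem _ _))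
  rw [hP]
  exact Polynomial.aeval_mem_adjoin_singleton K h |> (Algebra.adjoin_le (by simpa using hhA) ·)

/-- If `k` is algebraically closed in `M`, minimal polynomials over `k` remain minimal over `M`. -/
theorem minpoly_aux {k M Ω : Type*} [Field k] [Field M] [Field Ω] [Algebra k Ω] [Algebra M Ω]
    (H : ∀ y : M, IsAlgebraic k (algebraMap M Ω y) → ∃ z : k, algebraMap k Ω z = algebraMap M Ω y)
    (hkM : ∀ z : k, ∃ y : M, algebraMap M Ω y = algebraMap k Ω z)
    (α : Ω) (hα : IsIntegral k α) :
    (minpoly k α).natDegree ≤ (minpoly M α).natDegree := by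
  -- transport the minimal polynomial to `M`
  choose j hj using hkM
  obtain ⟨q, hq⟩ : ∃ q : Polynomial M, q.map (algebraMap M Ω) = (minpoly k α).map (algebraMap k Ω) := by
    have : (minpoly k α).map (algebraMap k Ω) ∈ Polynomial.lifts (algebraMap M Ω) := by
      rw [Polynomial.lifts_iff_coeff_lifts]
      intro i
      rw [Polynomial.coeff_map]
      exact ⟨_, hj _⟩
    exact this
  have hqα : Polynomial.aeval α q = 0 := by
    rw [Polynomial.aeval_def, ← Polynomial.eval_map, hq, Polynomial.eval_map,
      ← Polynomial.aeval_def, minpoly.aeval]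
  have hqm : q.Monic := by
    have := (minpoly.monic hα).map (algebraMap k Ω)
    rw [← hq] at this
    exact Polynomial.monic_of_injective (algebraMap M Ω).injective this
  have hαM : IsIntegral M α := ⟨q, hqm, hqα⟩
  have hdvd : (minpoly M α).map (algebraMap M Ω) ∣ (minpoly k α).map (algebraMap k Ω) := by
    rw [← hq]
    exact Polynomial.map_dvd _ (minpoly.dvd _ _ hqα)
  have hl := integralClosure.mem_lifts_of_monic_of_dvd_map Ω (minpoly.monic hα)
    ((minpoly.monic hαM).map (algebraMap M Ω)) hdvd
  rw [Polynomial.lifts_iff_coeff_lifts] at hl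
  obtain ⟨m, hm⟩ : ∃ m : Polynomial k,
      m.map (algebraMap k Ω) = (minpoly M α).map (algebraMap M Ω) := by
    have : (minpoly M α).map (algebraMap M Ω) ∈ Polynomial.lifts (algebraMap k Ω) := by
      rw [Polynomial.lifts_iff_coeff_lifts]
      intro i
      obtain ⟨⟨c, hc⟩, hc'⟩ := hl i
      rw [Polynomial.coeff_map] at hc' ⊢
      obtain ⟨z, hz⟩ := H ((minpoly M α).coeff i) (by
        rw [← hc']
        exact IsIntegral.isAlgebraic hc)
      exact ⟨z, hz⟩
    exact this
  have hmα : Polynomial.aeval α m = 0 := by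
    rw [Polynomial.aeval_def, ← Polynomial.eval_map, hm, Polynomial.eval_map,
      ← Polynomial.aeval_def, minpoly.aeval]
  have hm0 : m ≠ 0 := by
    rintro rfl
    rw [Polynomial.map_zero] at hm
    exact ((minpoly.monic hαM).map (algebraMap M Ω)).ne_zero hm.symm
  have h1 := Polynomial.natDegree_le_of_dvd (minpoly.dvd k α hmα) hm0
  have h2 := congrArg Polynomial.natDegree hm
  rw [Polynomial.natDegree_map, Polynomial.natDegree_map] at h2
  omega

/-- The divisibility property, for coefficients in a subset. -/
def DivProp {σ Ω : Type*} [Field Ω] (x : σ → Ω) (D : MvPolynomial σ Ω) (S : Set Ω) : Prop :=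
  ∀ A : MvPolynomial σ Ω, (∀ m, A.coeff m ∈ S) → eval x A = 0 → D ∣ A

theorem divProp_step {σ k M Ω : Type*} [Field k] [Field M] [Field Ω] [Algebra k Ω] [Algebra M Ω]
    (H : ∀ y : M, IsAlgebraic k (algebraMap M Ω y) → ∃ z : k, algebraMap k Ω z = algebraMap M Ω y)
    (hkM : ∀ z : k, ∃ y : M, algebraMap M Ω y = algebraMap k Ω z)
    (x : σ → Ω) (hx : ∀ i, ∃ y : M, algebraMap M Ω y = x i) (D : MvPolynomial σ Ω)
    (hD : DivProp x D (Set.range (algebraMap k Ω)))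
    (α : Ω) (hα : IsIntegral k α) :
    DivProp x D {b | ∃ P : Polynomial k, b = Polynomial.aeval α P} := by
  intro A hA hAx
  have hA' : ∀ m, ∃ P : Polynomial k, A.coeff m = Polynomial.aeval α P ∧
      P.natDegree < (minpoly k α).natDegree := by
    intro m
    obtain ⟨P, hP⟩ := hA m
    refine ⟨P %ₘ minpoly k α, ?_, ?_⟩
    · rw [hP, Polynomial.aeval_modByMonic_eq_self_of_root (minpoly.aeval k α)]
    · exact Polynomial.natDegree_modByMonic_lt _ (minpoly.monic hα) (minpoly.ne_one k α)
  choose P hP hPd using hA'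
  set d := (minpoly k α).natDegree with hd
  let B : ℕ → MvPolynomial σ Ω := fun j => ∑ m ∈ A.support, monomial m (algebraMap k Ω ((P m).coeff j))
  have hB : A = ∑ j ∈ Finset.range d, C (α ^ j) * B j := by
    conv_lhs => rw [A.as_sum]
    simp only [B, Finset.mul_sum]
    rw [Finset.sum_comm]
    refine Finset.sum_congr rfl fun m _ => ?_
    simp only [C_mul_monomial]
    rw [← map_sum]
    congr 1
    rw [hP m, Polynomial.aeval_eq_sum_range' (hPd m)]
    refine Finset.sum_congr rfl fun j _ => ?_
    rw [Algebra.smul_def, mul_comm]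
  have hBM : ∀ j, ∃ y : M, algebraMap M Ω y = eval x (B j) := by
    intro j
    have : eval x (B j) ∈ (algebraMap M Ω).range := by
      simp only [B, map_sum, eval_monomial]
      refine sum_mem fun m _ => mul_mem ?_ ?_
      · obtain ⟨y, hy⟩ := hkM ((P m).coeff j)
        exact ⟨y, hy⟩
      · refine prod_mem fun i _ => pow_mem ?_ _
        obtain ⟨y, hy⟩ := hx i
        exact ⟨y, hy⟩
    exact this
  choose b hb using hBM
  have hdM := minpoly_aux H hkM α hα
  rw [← hd] at hdM
  have hdpos : 0 < d := minpoly.natDegree_pos hα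
  let Z : Polynomial M := ∑ j ∈ Finset.range d, Polynomial.C (b j) * Polynomial.X ^ j
  have hZ : Polynomial.aeval α Z = 0 := by
    rw [← hAx, hB]
    simp only [Z, map_sum, map_mul, map_pow, Polynomial.aeval_C, Polynomial.aeval_X, eval_C, hb]
    exact Finset.sum_congr rfl fun j _ => mul_comm _ _
  have hZd : Z.natDegree < d := by
    refine (Polynomial.natDegree_sum_le_of_forall_le (n := d - 1) _ _ ?_).trans_lt (by omega)
    intro j hj
    have := Finset.mem_range.1 hj
    exact (Polynomial.natDegree_C_mul_X_pow_le _ _).trans (by omega)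
  have hZ0 : Z = 0 := by
    by_contra hne
    have := Polynomial.natDegree_le_of_dvd (minpoly.dvd M α hZ) hne
    omega
  have hb0 : ∀ j < d, b j = 0 := by
    intro j hj
    have h1 : Z.coeff j = 0 := by rw [hZ0, Polynomial.coeff_zero]
    simpa [Z, Polynomial.finsetSum_coeff, Polynomial.coeff_C_mul, Polynomial.coeff_X_pow, hj] using h1
  rw [hB]
  refine Finset.dvd_sum fun j hj => Dvd.dvd.mul_left (hD _ ?_ ?_) _
  · intro m
    have : coeff m (B j) ∈ (algebraMap k Ω).range := by
      simp only [B, coeff_sum]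
      refine sum_mem fun i _ => ?_
      classical
      rw [coeff_monomial]
      split_ifs
      · exact ⟨_, rfl⟩
      · exact zero_mem _
    exact this
  · rw [← hb, hb0 j (Finset.mem_range.1 hj), map_zero]


set_option linter.unusedSectionVars false

section Setup

variable {K : Type*} [Field K] {n : ℕ} {f : MvPolynomial (Fin n) K}
  {k N Ω : Type*} [Field k] [Field N] [Field Ω]
  [Algebra (MvPolynomial (Fin n) K) N] [IsFractionRing (MvPolynomial (Fin n) K) N]
  [Algebra (MvPolynomial (Fin n) K) Ω] [Algebra N Ω] [IsScalarTower (MvPolynomial (Fin n) K) N Ω]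
  [Algebra K Ω] [IsScalarTower K (MvPolynomial (Fin n) K) Ω]
  [Algebra (Algebra.adjoin K {f}) k] [IsFractionRing (Algebra.adjoin K {f}) k]
  [Algebra k Ω] [IsScalarTower (Algebra.adjoin K {f}) k Ω]

/-- Elements of `K(f)` as fractions. -/
theorem frac_aux (f : MvPolynomial (Fin n) K)
    [Algebra (Algebra.adjoin K {f}) k] [IsFractionRing (Algebra.adjoin K {f}) k]
    [IsScalarTower (Algebra.adjoin K {f}) k Ω]
    (hinj : Function.Injective (algebraMap (MvPolynomial (Fin n) K) Ω)) (z : k) :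
    ∃ r s : Polynomial K, Polynomial.aeval (algebraMap (MvPolynomial (Fin n) K) Ω f) s ≠ 0 ∧
      algebraMap k Ω z = Polynomial.aeval (algebraMap (MvPolynomial (Fin n) K) Ω f) r /
        Polynomial.aeval (algebraMap (MvPolynomial (Fin n) K) Ω f) s := by
  obtain ⟨⟨a, ha⟩, ⟨b, hb⟩, hb0, rfl⟩ := IsFractionRing.div_surjective (A := Algebra.adjoin K {f}) z
  have ha' := ha
  have hb' := hb
  rw [Algebra.adjoin_singleton_eq_range_aeval] at ha' hb'
  obtain ⟨r, rfl⟩ := ha'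
  obtain ⟨s, rfl⟩ := hb'
  refine ⟨r, s, ?_, ?_⟩
  · rw [Polynomial.aeval_algebraMap_apply, Ne, map_eq_zero_iff _ hinj]
    intro h0
    apply nonZeroDivisors.ne_zero hb0
    exact Subtype.ext h0
  · rw [map_div₀, ← IsScalarTower.algebraMap_apply, ← IsScalarTower.algebraMap_apply,
      Polynomial.aeval_algebraMap_apply, Polynomial.aeval_algebraMap_apply]
    rfl

theorem divProp_base (hinj : Function.Injective (algebraMap (MvPolynomial (Fin n) K) Ω)) :
    DivProp (fun i => algebraMap (MvPolynomial (Fin n) K) Ω (X i))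
      (map (algebraMap K Ω) f - C (algebraMap (MvPolynomial (Fin n) K) Ω f))
      (Set.range (algebraMap k Ω)) := by
  intro A hA hAx
  set F := algebraMap (MvPolynomial (Fin n) K) Ω f with hF
  have hA' : ∀ m, ∃ r s : Polynomial K, Polynomial.aeval F s ≠ 0 ∧
      A.coeff m * Polynomial.aeval F s = Polynomial.aeval F r := by
    intro m
    obtain ⟨z, hz⟩ := hA m
    obtain ⟨r, s, h0, h1⟩ := frac_aux (Ω := Ω) f hinj z
    exact ⟨r, s, h0, by rw [← hz, h1, div_mul_cancel₀ _ h0]⟩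
  choose r s hs hr using hA'
  classical
  set Q : Polynomial K := ∏ m ∈ A.support, s m with hQ
  have hQ0 : Polynomial.aeval F Q ≠ 0 := by
    rw [hQ, map_prod]
    exact Finset.prod_ne_zero_iff.2 fun m _ => hs m
  let P : (Fin n →₀ ℕ) → Polynomial K := fun m => r m * ∏ i ∈ A.support.erase m, s i
  have hP : ∀ m ∈ A.support, Polynomial.aeval F Q * A.coeff m = Polynomial.aeval F (P m) := by
    intro m hm
    rw [hQ, ← Finset.mul_prod_erase _ _ hm, map_mul, map_mul, ← hr m]
    ring
  -- the polynomial over `K`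
  let a : MvPolynomial (Fin n) K := ∑ m ∈ A.support, monomial m 1 * Polynomial.aeval f (P m)
  have ha : a = 0 := by
    apply hinj
    rw [map_zero, ← mul_zero (Polynomial.aeval F Q), ← hAx, eval_eq', Finset.mul_sum]
    simp only [a, map_sum, map_mul]
    refine Finset.sum_congr rfl fun m hm => ?_
    rw [← mul_assoc, hP m hm, ← Polynomial.aeval_algebraMap_apply, mul_comm]
    congr 1
    rw [monomial_eq, Finsupp.prod_fintype _ _ (by simp)]
    simp [map_prod]
  have hCA : C (Polynomial.aeval F Q) * A =
      ∑ m ∈ A.support, monomial m 1 * C (Polynomial.aeval F (P m)) := by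
    conv_lhs => rw [A.as_sum]
    rw [Finset.mul_sum]
    refine Finset.sum_congr rfl fun m hm => ?_
    rw [C_mul_monomial, hP m hm, mul_comm, C_mul_monomial, mul_one]
  have hma : ∑ m ∈ A.support, monomial m 1 *
      Polynomial.aeval (map (algebraMap K Ω) f) (P m) = 0 := by
    have := congrArg (map (algebraMap K Ω)) ha
    rw [map_zero] at this
    rw [← this]
    simp only [a, map_sum, map_mul, map_monomial, map_one]
    refine Finset.sum_congr rfl fun m hm => ?_
    congr 1
    exact Polynomial.aeval_algHom_apply (MvPolynomial.mapAlgHom (Algebra.ofId K Ω)) f (P m)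
  have hunit : IsUnit (C (σ := Fin n) (Polynomial.aeval F Q)) := (isUnit_iff_ne_zero.2 hQ0).map C
  rw [← hunit.dvd_mul_left, hCA, ← sub_zero (∑ m ∈ A.support, _), ← hma, ← Finset.sum_sub_distrib]
  refine Finset.dvd_sum fun m _ => ?_
  rw [← mul_sub]
  refine Dvd.dvd.mul_left ?_ _
  have h1 := Polynomial.sub_dvd_eval_sub (map (algebraMap K Ω) f) (C F)
    ((P m).map (algebraMap K (MvPolynomial (Fin n) Ω)))
  rw [Polynomial.eval_map_algebraMap, Polynomial.eval_map_algebraMap] at h1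
  rw [dvd_sub_comm]
  convert h1 using 2
  exact (Polynomial.aeval_algHom_apply (IsScalarTower.toAlgHom K Ω (MvPolynomial (Fin n) Ω)) F (P m)).symm

theorem closed_aux
    (hA : ∀ r : MvPolynomial (Fin n) K, IsIntegral (Algebra.adjoin K {f}) r →
      r ∈ Algebra.adjoin K {f}) (y : N) (hy : IsAlgebraic k (algebraMap N Ω y)) :
    ∃ z : k, algebraMap k Ω z = algebraMap N Ω y := by
  have hy1 : IsAlgebraic (Algebra.adjoin K {f}) (algebraMap N Ω y) :=
    (IsFractionRing.isAlgebraic_iff (Algebra.adjoin K {f}) k Ω).2 hy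
  have tow : IsScalarTower (Algebra.adjoin K {f}) N Ω :=
    IsScalarTower.of_algebraMap_eq fun x =>
      IsScalarTower.algebraMap_apply (MvPolynomial (Fin n) K) N Ω x
  obtain ⟨c, hc0, hc⟩ := hy1.exists_integral_multiple
  have hsm : algebraMap N Ω (c • y) = c • algebraMap N Ω y := by
    rw [Algebra.smul_def, Algebra.smul_def, map_mul, ← IsScalarTower.algebraMap_apply]
  have hc1 : IsIntegral (Algebra.adjoin K {f}) (c • y) := by
    rw [← isIntegral_algebraMap_iff (algebraMap N Ω).injective]
    rwa [hsm]
  have hc2 : IsIntegral (MvPolynomial (Fin n) K) (c • y) := hc1.tower_top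
  obtain ⟨p, hp⟩ := IsIntegrallyClosed.algebraMap_eq_of_integral hc2
  have hp1 : IsIntegral (Algebra.adjoin K {f}) p := by
    rw [← isIntegral_algebraMap_iff (IsFractionRing.injective (MvPolynomial (Fin n) K) N), hp]
    exact hc1
  have hpA := hA p hp1
  refine ⟨algebraMap (Algebra.adjoin K {f}) k ⟨p, hpA⟩ / algebraMap (Algebra.adjoin K {f}) k c, ?_⟩
  rw [map_div₀, ← IsScalarTower.algebraMap_apply, ← IsScalarTower.algebraMap_apply]
  have h1 : algebraMap (Algebra.adjoin K {f}) Ω ⟨p, hpA⟩ =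
      algebraMap (Algebra.adjoin K {f}) Ω c * algebraMap N Ω y := by
    rw [← Algebra.smul_def, ← hsm, ← hp, ← IsScalarTower.algebraMap_apply]
    rfl
  rw [h1, mul_div_cancel_left₀]
  have h2 : Function.Injective (algebraMap (Algebra.adjoin K {f}) k) := IsFractionRing.injective _ _
  rw [IsScalarTower.algebraMap_apply _ k Ω]
  simpa [map_eq_zero_iff _ h2] using hc0


theorem range_aux (f : MvPolynomial (Fin n) K)
    [Algebra (Algebra.adjoin K {f}) k] [IsFractionRing (Algebra.adjoin K {f}) k]
    [IsScalarTower (Algebra.adjoin K {f}) k Ω]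
    (hinj : Function.Injective (algebraMap (MvPolynomial (Fin n) K) Ω)) (z : k) :
    ∃ y : N, algebraMap N Ω y = algebraMap k Ω z := by
  obtain ⟨r, s, _, h⟩ := frac_aux (Ω := Ω) f hinj z
  refine ⟨algebraMap _ N (Polynomial.aeval f r) / algebraMap _ N (Polynomial.aeval f s), ?_⟩
  rw [h, map_div₀, ← IsScalarTower.algebraMap_apply, ← IsScalarTower.algebraMap_apply,
    Polynomial.aeval_algebraMap_apply, Polynomial.aeval_algebraMap_apply]

theorem adjoin_aux {k Ω : Type*} [Field k] [Field Ω] [Algebra k Ω] {α b : Ω} (hα : IsIntegral k α)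
    (hb : b ∈ IntermediateField.adjoin k {α}) : ∃ P : Polynomial k, b = Polynomial.aeval α P := by
  have h1 : b ∈ (IntermediateField.adjoin k {α}).toSubalgebra := hb
  rw [IntermediateField.adjoin_simple_toSubalgebra_of_isAlgebraic hα.isAlgebraic,
    Algebra.adjoin_singleton_eq_range_aeval] at h1
  obtain ⟨P, hP⟩ := h1
  exact ⟨P, hP.symm⟩

theorem root_aux {K : Type*} [Field K] [PerfectField K] {Ω : Type*} [Field Ω] [Algebra K Ω]
    (p : ℕ) [ExpChar K p] (e : ℕ) (τ : Ω) (P : Polynomial K) :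
    ∃ P₁ : Polynomial K, Polynomial.aeval (τ ^ p ^ e) P = (Polynomial.aeval τ P₁) ^ p ^ e := by
  have : PerfectRing K p := PerfectField.toPerfectRing p
  obtain ⟨P₁, hP₁⟩ := Polynomial.map_surjective (iterateFrobenius K p e)
    (bijective_iterateFrobenius K p e).2 P
  refine ⟨P₁, ?_⟩
  rw [← map_pow, ← Polynomial.map_iterateFrobenius_expand, Polynomial.map_expand, hP₁,
    Polynomial.expand_aeval]

theorem divProp_insep [PerfectField K] [IsAlgClosed Ω]
    (hinj : Function.Injective (algebraMap (MvPolynomial (Fin n) K) Ω))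
    (hA : ∀ r : MvPolynomial (Fin n) K, IsIntegral (Algebra.adjoin K {f}) r →
      r ∈ Algebra.adjoin K {f}) (N : Type*) [Field N]
    [Algebra (MvPolynomial (Fin n) K) N] [IsFractionRing (MvPolynomial (Fin n) K) N] [Algebra N Ω]
    [IsScalarTower (MvPolynomial (Fin n) K) N Ω]
    (p : ℕ) [ExpChar K p] [ExpChar k p] [ExpChar Ω p] :
    DivProp (fun i => algebraMap (MvPolynomial (Fin n) K) Ω (X i))
      (map (algebraMap K Ω) f - C (algebraMap (MvPolynomial (Fin n) K) Ω f))
      (perfectClosure k Ω : Set Ω) := by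
  intro A hAc hAx
  set F := algebraMap (MvPolynomial (Fin n) K) Ω f with hF
  have hAc' : ∀ m, ∃ e : ℕ, A.coeff m ^ p ^ e ∈ (algebraMap k Ω).range := fun m =>
    (mem_perfectClosure_iff_pow_mem p).1 (hAc m)
  choose e he using hAc'
  set E := A.support.sup e with hE
  have hpos : 0 < p ^ E := pow_pos (expChar_pos K p) _
  obtain ⟨τ, hτ⟩ := IsAlgClosed.exists_pow_nat_eq F hpos
  let fk : k := algebraMap (Algebra.adjoin K {f}) k ⟨f, Algebra.subset_adjoin rfl⟩
  have hfk : algebraMap k Ω fk = F := by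
    rw [← IsScalarTower.algebraMap_apply]; rfl
  have hτi : IsIntegral k τ := by
    apply IsIntegral.of_pow hpos
    rw [hτ, ← hfk]
    exact isIntegral_algebraMap
  refine divProp_step (k := k) (M := N) (closed_aux hA) (range_aux f hinj) _
    (fun i => ⟨algebraMap _ N (X i), (IsScalarTower.algebraMap_apply _ _ _ _).symm⟩) _
    (divProp_base hinj) τ hτi A ?_ hAx
  intro m
  apply adjoin_aux hτi
  by_cases hm : A.coeff m = 0
  · rw [hm]; exact zero_mem _
  have hme : e m ≤ E := Finset.le_sup (f := e) (mem_support_iff.2 hm)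
  have h1 : A.coeff m ^ p ^ E ∈ (algebraMap k Ω).range := by
    obtain ⟨d, hd⟩ := Nat.exists_eq_add_of_le hme
    rw [hd, pow_add, pow_mul]
    exact pow_mem (he m) _
  obtain ⟨z, hz⟩ := h1
  obtain ⟨r, s, hs, hrs⟩ := frac_aux (Ω := Ω) f hinj z
  rw [← hF, ← hτ] at hrs
  obtain ⟨r₁, hr₁⟩ := root_aux p E τ r
  obtain ⟨s₁, hs₁⟩ := root_aux p E τ s
  have h2 : A.coeff m = Polynomial.aeval τ r₁ / Polynomial.aeval τ s₁ := by
    apply iterateFrobenius_inj Ω p E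
    rw [iterateFrobenius_def, iterateFrobenius_def, ← hz, hrs, hr₁, hs₁, div_pow]
  have h3 : ∀ P : Polynomial K, Polynomial.aeval τ P ∈ IntermediateField.adjoin k {τ} := by
    intro P
    rw [Polynomial.aeval_eq_sum_range]
    refine sum_mem fun i _ => ?_
    rw [Algebra.smul_def]
    refine mul_mem ?_ (pow_mem (IntermediateField.mem_adjoin_simple_self k τ) _)
    have : algebraMap K Ω (P.coeff i) = algebraMap k Ω
        (algebraMap (Algebra.adjoin K {f}) k (algebraMap K _ (P.coeff i))) := by
      rw [← IsScalarTower.algebraMap_apply (Algebra.adjoin K {f}) k Ω]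
      rw [IsScalarTower.algebraMap_apply K (MvPolynomial (Fin n) K) Ω]
      rfl
    rw [this]
    exact IntermediateField.algebraMap_mem _ _
  rw [h2]
  exact div_mem (h3 _) (h3 _)

theorem divProp_alg [PerfectField K] [IsAlgClosed Ω]
    (hinj : Function.Injective (algebraMap (MvPolynomial (Fin n) K) Ω))
    (hA : ∀ r : MvPolynomial (Fin n) K, IsIntegral (Algebra.adjoin K {f}) r →
      r ∈ Algebra.adjoin K {f}) (k N : Type*) [Field k] [Field N]
    [Algebra (MvPolynomial (Fin n) K) N] [IsFractionRing (MvPolynomial (Fin n) K) N] [Algebra N Ω]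
    [IsScalarTower (MvPolynomial (Fin n) K) N Ω]
    [Algebra (Algebra.adjoin K {f}) k] [IsFractionRing (Algebra.adjoin K {f}) k]
    [Algebra k Ω] [IsScalarTower (Algebra.adjoin K {f}) k Ω] :
    DivProp (fun i => algebraMap (MvPolynomial (Fin n) K) Ω (X i))
      (map (algebraMap K Ω) f - C (algebraMap (MvPolynomial (Fin n) K) Ω f))
      {b | IsAlgebraic k b} := by
  intro A hAc hAx
  obtain ⟨p, hp⟩ := ExpChar.exists K
  have hpΩ : ExpChar Ω p := expChar_of_injective_algebraMap (algebraMap K Ω).injective p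
  have hpk : ExpChar k p := (RingHom.expChar_iff (algebraMap k Ω) (algebraMap k Ω).injective p).2 hpΩ
  have hpN : ExpChar N p := (RingHom.expChar_iff (algebraMap N Ω) (algebraMap N Ω).injective p).2 hpΩ
  let k' := perfectClosure k Ω
  let M := perfectClosure N Ω
  have : PerfectField k' := perfectClosure.perfectField k Ω
  have hH : ∀ y : M, IsAlgebraic k' (algebraMap M Ω y) →
      ∃ z : k', algebraMap k' Ω z = algebraMap M Ω y := by
    rintro ⟨y, hyM⟩ hy
    have hy' : IsAlgebraic k y := hy.restrictScalars k
    obtain ⟨e, y0, he⟩ := (mem_perfectClosure_iff_pow_mem p).1 hyM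
    obtain ⟨z, hz⟩ := closed_aux (k := k) (N := N) (Ω := Ω) hA y0 (by rw [he]; exact hy'.pow _)
    exact ⟨⟨y, (mem_perfectClosure_iff_pow_mem p).2 ⟨e, z, hz.trans he⟩⟩, rfl⟩
  have hkM : ∀ z : k', ∃ y : M, algebraMap M Ω y = algebraMap k' Ω z := by
    rintro ⟨z, hz⟩
    obtain ⟨e, z0, he⟩ := (mem_perfectClosure_iff_pow_mem p).1 hz
    obtain ⟨y, hy⟩ := range_aux (k := k) (N := N) (Ω := Ω) f hinj z0
    exact ⟨⟨z, (mem_perfectClosure_iff_pow_mem p).2 ⟨e, y, hy.trans he⟩⟩, rfl⟩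
  have hbase : DivProp (fun i => algebraMap (MvPolynomial (Fin n) K) Ω (X i))
      (map (algebraMap K Ω) f - C (algebraMap (MvPolynomial (Fin n) K) Ω f))
      (Set.range (algebraMap k' Ω)) := by
    intro B hB hBx
    refine divProp_insep (k := k) hinj hA N p B (fun m => ?_) hBx
    obtain ⟨z, hz⟩ := hB m
    rw [← hz]
    exact z.2
  -- primitive element
  let S : Set Ω := A.coeff '' A.support
  have hSfin : S.Finite := A.support.finite_toSet.image _
  have hSalg : ∀ b ∈ S, IsIntegral k' b := by
    rintro _ ⟨m, _, rfl⟩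
    exact ((hAc m).tower_top k').isIntegral
  let E := IntermediateField.adjoin k' S
  have hfin : Finite S := hSfin
  have : FiniteDimensional k' E := IntermediateField.finiteDimensional_adjoin hSalg
  obtain ⟨α, hα⟩ := Field.exists_primitive_element k' E
  have hαi : IsIntegral k' (α : Ω) := (IsIntegral.of_finite k' α).map E.val
  refine divProp_step (k := k') (M := M) hH hkM _ (fun i => ?_) _ hbase (α : Ω) hαi A ?_ hAx
  · refine ⟨algebraMap N M (algebraMap (MvPolynomial (Fin n) K) N (X i)), ?_⟩
    exact (IsScalarTower.algebraMap_apply (MvPolynomial (Fin n) K) N Ω (X i)).symm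
  · intro m
    apply adjoin_aux hαi
    by_cases hm : A.coeff m = 0
    · rw [hm]; exact zero_mem _
    have h1 : A.coeff m ∈ E := IntermediateField.subset_adjoin _ _ ⟨m, mem_support_iff.2 hm, rfl⟩
    have h2 : (⟨A.coeff m, h1⟩ : E) ∈ IntermediateField.adjoin k' {α} := by rw [hα]; trivial
    have h3 : A.coeff m ∈ (IntermediateField.adjoin k' {α}).map E.val := ⟨_, h2, rfl⟩
    rw [IntermediateField.adjoin_map] at h3
    simpa using h3

end Setup

theorem totalDegree_map_aux {A B σ : Type*} [CommSemiring A] [CommSemiring B]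
    {φ : A →+* B} (p : MvPolynomial σ A) (hφ : Function.Injective φ) :
    (map φ p).totalDegree = p.totalDegree := by
  simp only [totalDegree, support_map_of_injective p hφ]

theorem trans_aux {K : Type*} [Field K] [Infinite K] {n : ℕ} (f : MvPolynomial (Fin n) K)
    (hf : 0 < f.totalDegree) (P : Polynomial K) (hP : Polynomial.aeval f P = 0) : P = 0 := by
  obtain ⟨ψ, hψ⟩ := line_aux f hf
  replace hP := congrArg ψ hP
  rw [← Polynomial.aeval_algHom_apply, map_zero] at hP
  by_contra hne
  have h2 : P.comp (ψ f) = 0 := by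
    rw [← hP, Polynomial.comp_eq_aeval]
  rw [Polynomial.comp_eq_zero_iff] at h2
  rcases h2 with h2 | ⟨_, h2⟩
  · exact hne h2
  · rw [h2] at hψ; simp at hψ

theorem unit_descend_aux {A B σ : Type*} [Field A] [Field B] (φ : A →+* B)
    (p : MvPolynomial σ A) (h : IsUnit (map φ p)) : IsUnit p := by
  rw [isUnit_iff_totalDegree_of_isReduced] at h ⊢
  rw [totalDegree_map_aux _ φ.injective, coeff_map] at h
  refine ⟨?_, h.2⟩
  have h1 := h.1.ne_zero
  rw [isUnit_iff_ne_zero]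
  intro h0; rw [h0, map_zero] at h1; exact h1 rfl

theorem not_unit_aux {Ω σ : Type*} [Field Ω] (h : MvPolynomial σ Ω) (a : Ω)
    (hh : ∀ b, h ≠ C b) : ¬ IsUnit (h - C a) := by
  intro hu
  obtain ⟨u, _, hu⟩ := isUnit_iff_eq_C_of_isReduced.1 hu
  apply hh (u + a)
  rw [map_add, ← hu, sub_add_cancel]

/-- A polynomial in `h` minus a constant is reducible. -/
theorem reducible_aux {Ω σ : Type*} [Field Ω] [IsAlgClosed Ω] (h : MvPolynomial σ Ω)
    (g : Polynomial Ω) (t : Ω) (hg : 2 ≤ g.natDegree) (hh : ∀ b, h ≠ C b) :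
    ¬ Irreducible (Polynomial.aeval h g - C t) := by
  intro hirr
  set G := g - Polynomial.C t with hG
  have hGd : G.natDegree = g.natDegree := Polynomial.natDegree_sub_C
  have hGe : Polynomial.aeval h G = Polynomial.aeval h g - C t := by
    rw [hG, map_sub, Polynomial.aeval_C]; rfl
  obtain ⟨a, ha⟩ := IsAlgClosed.exists_root G (by
    intro h0; have := Polynomial.natDegree_eq_zero_iff_degree_le_zero.2 h0.le; omega)
  obtain ⟨G₁, hG₁⟩ := Polynomial.dvd_iff_isRoot.2 ha
  have hG0 : G ≠ 0 := by rintro h0; rw [h0] at hGd; simp at hGd; omega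
  have hG₁0 : G₁ ≠ 0 := by rintro rfl; simp at hG₁; exact hG0 hG₁
  have hd1 : G.natDegree = 1 + G₁.natDegree := by
    rw [hG₁, Polynomial.natDegree_mul (Polynomial.X_sub_C_ne_zero a) hG₁0,
      Polynomial.natDegree_X_sub_C]
  obtain ⟨b, hb⟩ := IsAlgClosed.exists_root G₁ (by
    intro h0; have := Polynomial.natDegree_eq_zero_iff_degree_le_zero.2 h0.le; omega)
  obtain ⟨G₂, hG₂⟩ := Polynomial.dvd_iff_isRoot.2 hb
  have hX : ∀ c : Ω, Polynomial.aeval h (Polynomial.X - Polynomial.C c) = h - C c := by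
    intro c; rw [map_sub, Polynomial.aeval_X, Polynomial.aeval_C]; rfl
  have hfac : Polynomial.aeval h g - C t = (h - C a) * ((h - C b) * Polynomial.aeval h G₂) := by
    rw [← hGe, hG₁, hG₂, map_mul, map_mul, hX, hX]
  rcases hirr.isUnit_or_isUnit hfac with h1 | h1
  · exact not_unit_aux h a hh h1
  · exact not_unit_aux h b hh (isUnit_of_mul_isUnit_left h1)

theorem mpr_aux (F : Type) [Field F] (n : ℕ)
    (f : MvPolynomial (Fin n) F) (hf : 0 < f.totalDegree)
    (hirr : Irreducible
          (MvPolynomial.map (algebraMap F (AlgebraicClosure (RatFunc F))) f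
            - MvPolynomial.C
                (algebraMap (RatFunc F) (AlgebraicClosure (RatFunc F)) RatFunc.X))) :
    ¬ (MvPolynomial.map (algebraMap F (AlgebraicClosure F)) f).Decomposable := by
  rintro ⟨g, h, hg, hgh⟩
  let j : AlgebraicClosure F →ₐ[F] AlgebraicClosure (RatFunc F) := IsAlgClosed.lift
  have hmap : map (algebraMap F (AlgebraicClosure (RatFunc F))) f =
      Polynomial.aeval (map (j : AlgebraicClosure F →+* AlgebraicClosure (RatFunc F)) h)
        (g.map (j : AlgebraicClosure F →+* AlgebraicClosure (RatFunc F))) := by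
    have h1 := congrArg (map (j : AlgebraicClosure F →+* AlgebraicClosure (RatFunc F))) hgh
    rw [map_map, AlgHom.comp_algebraMap] at h1
    rw [h1, Polynomial.aeval_def, Polynomial.aeval_def, Polynomial.hom_eval₂, Polynomial.eval₂_map]
    congr 1
    ext x
    simp [MvPolynomial.algebraMap_eq]
  rw [hmap] at hirr
  refine reducible_aux _ _ _ ?_ ?_ hirr
  · rwa [Polynomial.natDegree_map]
  · intro b hb
    rw [hb] at hmap
    have h2 := congrArg totalDegree hmap
    have h3 : Polynomial.aeval (C b : MvPolynomial (Fin n) (AlgebraicClosure (RatFunc F)))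
        (g.map (j : AlgebraicClosure F →+* AlgebraicClosure (RatFunc F))) =
        C (Polynomial.aeval b (g.map (j : AlgebraicClosure F →+* AlgebraicClosure (RatFunc F)))) :=
      Polynomial.aeval_algebraMap_apply _ b _
    rw [h3, totalDegree_C, totalDegree_map_aux _ (algebraMap F _).injective] at h2
    omega

theorem mp_core {F K : Type*} [Field F] [Field K] [Algebra F K] [Infinite K] [PerfectField K]
    {n : ℕ} (f : MvPolynomial (Fin n) F) (hf : 0 < f.totalDegree)
    (fK : MvPolynomial (Fin n) K) (hfK : fK = map (algebraMap F K) f)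
    {k N Ω : Type*} [Field k] [Field N] [Field Ω] [IsAlgClosed Ω]
    [Algebra (MvPolynomial (Fin n) K) N] [IsFractionRing (MvPolynomial (Fin n) K) N]
    [Algebra (MvPolynomial (Fin n) K) Ω] [Algebra N Ω] [IsScalarTower (MvPolynomial (Fin n) K) N Ω]
    [Algebra K Ω] [IsScalarTower K (MvPolynomial (Fin n) K) Ω]
    [Algebra (Algebra.adjoin K {fK}) k] [IsFractionRing (Algebra.adjoin K {fK}) k]
    [Algebra k Ω] [IsScalarTower (Algebra.adjoin K {fK}) k Ω]
    (hinj : Function.Injective (algebraMap (MvPolynomial (Fin n) K) Ω))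
    (hA : ∀ r : MvPolynomial (Fin n) K, IsIntegral (Algebra.adjoin K {fK}) r →
      r ∈ Algebra.adjoin K {fK}) :
    Irreducible
          (MvPolynomial.map (algebraMap F (AlgebraicClosure (RatFunc F))) f
            - MvPolynomial.C
                (algebraMap (RatFunc F) (AlgebraicClosure (RatFunc F)) RatFunc.X)) := by
  have hfK0 : 0 < fK.totalDegree := by
    rwa [hfK, totalDegree_map_aux _ (algebraMap F K).injective]
  have hmem : fK ∈ Algebra.adjoin K {fK} := Algebra.subset_adjoin rfl
  let φ0 : Polynomial F →+* Algebra.adjoin K {fK} :=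
    Polynomial.eval₂RingHom ((algebraMap K (Algebra.adjoin K {fK})).comp (algebraMap F K)) ⟨fK, hmem⟩
  have hφ0v : ∀ P, (φ0 P : MvPolynomial (Fin n) K) =
      Polynomial.aeval fK (P.map (algebraMap F K)) := by
    intro P
    have : (φ0 P : MvPolynomial (Fin n) K) = (Algebra.adjoin K {fK}).val.toRingHom (φ0 P) := rfl
    rw [this]
    simp only [φ0, Polynomial.coe_eval₂RingHom, Polynomial.hom_eval₂]
    rw [Polynomial.aeval_def, Polynomial.eval₂_map]
    rfl
  have hφ0 : Function.Injective φ0 := by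
    rw [injective_iff_map_eq_zero]
    intro P hP
    have h1 := hφ0v P
    rw [hP] at h1
    have h2 := trans_aux fK hfK0 _ h1.symm
    exact (Polynomial.map_eq_zero _).1 h2
  have hφk : Function.Injective ((algebraMap (Algebra.adjoin K {fK}) k).comp φ0) :=
    (IsFractionRing.injective (Algebra.adjoin K {fK}) k).comp hφ0
  let ι0 : RatFunc F →+* k := IsFractionRing.lift hφk
  have hι0 : ∀ P : Polynomial F, ι0 (algebraMap (Polynomial F) (RatFunc F) P) =
      algebraMap (Algebra.adjoin K {fK}) k (φ0 P) := fun P => IsFractionRing.lift_algebraMap hφk P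
  let _ : Algebra (RatFunc F) k := ι0.toAlgebra
  let _ : Algebra (RatFunc F) Ω := ((algebraMap k Ω).comp ι0).toAlgebra
  have : IsScalarTower (RatFunc F) k Ω := IsScalarTower.of_algebraMap_eq (fun _ => rfl)
  have hkey : ∀ P : Polynomial F, algebraMap (RatFunc F) Ω (algebraMap (Polynomial F) (RatFunc F) P)
      = algebraMap (MvPolynomial (Fin n) K) Ω (Polynomial.aeval fK (P.map (algebraMap F K))) := by
    intro P
    have h1 : algebraMap (RatFunc F) Ω (algebraMap (Polynomial F) (RatFunc F) P) =
      algebraMap k Ω (ι0 (algebraMap (Polynomial F) (RatFunc F) P)) := rfl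
    rw [h1, hι0, ← IsScalarTower.algebraMap_apply, ← hφ0v]
    rfl
  let J : AlgebraicClosure (RatFunc F) →ₐ[RatFunc F] Ω := IsAlgClosed.lift
  let Jr : AlgebraicClosure (RatFunc F) →+* Ω := J
  have hJt : Jr (algebraMap (RatFunc F) (AlgebraicClosure (RatFunc F)) RatFunc.X) =
      algebraMap (MvPolynomial (Fin n) K) Ω fK := by
    have h1 : Jr (algebraMap (RatFunc F) (AlgebraicClosure (RatFunc F)) RatFunc.X) =
      algebraMap (RatFunc F) Ω RatFunc.X := J.commutes _
    rw [h1, ← RatFunc.algebraMap_X, hkey]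
    simp
  have hJF : Jr.comp (algebraMap F (AlgebraicClosure (RatFunc F))) =
      (algebraMap K Ω).comp (algebraMap F K) := by
    ext x
    have h1 : Jr (algebraMap F (AlgebraicClosure (RatFunc F)) x) =
        algebraMap (RatFunc F) Ω (algebraMap F (RatFunc F) x) := by
      rw [IsScalarTower.algebraMap_apply F (RatFunc F) (AlgebraicClosure (RatFunc F))]
      exact J.commutes _
    rw [RingHom.comp_apply, h1, RingHom.comp_apply,
      IsScalarTower.algebraMap_apply F (Polynomial F) (RatFunc F), hkey,
      IsScalarTower.algebraMap_apply K (MvPolynomial (Fin n) K) Ω]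
    simp
  have hJalg : ∀ b, IsAlgebraic k (Jr b) := by
    intro b
    have h1 : IsAlgebraic (RatFunc F) (J b) := (Algebra.IsAlgebraic.isAlgebraic b).algHom J
    exact h1.tower_top k
  set D := MvPolynomial.map (algebraMap F (AlgebraicClosure (RatFunc F))) f
            - MvPolynomial.C
                (algebraMap (RatFunc F) (AlgebraicClosure (RatFunc F)) RatFunc.X) with hD
  have hDnu : ¬ IsUnit D := by
    apply not_unit_aux
    intro b hb
    have h2 := congrArg totalDegree hb
    rw [totalDegree_C, totalDegree_map_aux _ (algebraMap F _).injective] at h2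
    omega
  set D' := map (algebraMap K Ω) fK - C (algebraMap (MvPolynomial (Fin n) K) Ω fK) with hD'
  have hJD : map Jr D = D' := by
    rw [hD, hD', map_sub, map_map, hJF, map_C, hJt, hfK, map_map]
  have hD0 : D' ≠ 0 := by
    intro h0
    rw [hD', sub_eq_zero] at h0
    have h2 := congrArg totalDegree h0
    rw [totalDegree_C, totalDegree_map_aux _ (algebraMap K Ω).injective] at h2
    omega
  have hdiv := divProp_alg (f := fK) (Ω := Ω) hinj hA k N
  have hD'x : eval (fun i => algebraMap (MvPolynomial (Fin n) K) Ω (X i)) D' = 0 := by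
    rw [hD', map_sub, eval_C, eval_map, sub_eq_zero,
      IsScalarTower.algebraMap_eq K (MvPolynomial (Fin n) K) Ω]
    have h1 := MvPolynomial.hom_eval₂ fK (C : K →+* MvPolynomial (Fin n) K)
      (algebraMap (MvPolynomial (Fin n) K) Ω) X
    rw [eval₂_eta] at h1
    exact h1.symm
  have main : ∀ A B, D = A * B →
      eval (fun i => algebraMap (MvPolynomial (Fin n) K) Ω (X i)) (map Jr A) = 0 → IsUnit B := by
    intro A B hAB hx
    obtain ⟨Q, hQ⟩ := hdiv (map Jr A) (fun m => by rw [coeff_map]; exact hJalg _) hx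
    apply unit_descend_aux Jr
    have h1 : D' = map Jr A * map Jr B := by rw [← hJD, hAB, map_mul]
    rw [hQ, mul_assoc] at h1
    have h2 : Q * map Jr B = 1 := by
      apply mul_left_cancel₀ hD0
      rw [mul_one]; exact h1.symm
    exact IsUnit.of_mul_eq_one _ (by rw [mul_comm]; exact h2)
  refine ⟨hDnu, fun {A B} hAB => ?_⟩
  have h1 := hD'x
  rw [← hJD, hAB, map_mul, map_mul, mul_eq_zero] at h1
  rcases h1 with h1 | h1
  · exact Or.inr (main A B hAB h1)
  · exact Or.inl (main B A (hAB.trans (mul_comm _ _)) h1)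

theorem frac_exists_aux (A Ω : Type) [CommRing A] [IsDomain A] [Field Ω] [Algebra A Ω]
    [FaithfulSMul A Ω] : ∃ (k : Type) (_ : Field k) (_ : Algebra A k) (_ : IsFractionRing A k)
    (_ : Algebra k Ω), IsScalarTower A k Ω :=
  ⟨FractionRing A, inferInstance, inferInstance, inferInstance, FractionRing.liftAlgebra A Ω,
    FractionRing.isScalarTower_liftAlgebra A Ω⟩

theorem mp_aux (F : Type) [Field F] (n : ℕ)
    (f : MvPolynomial (Fin n) F) (hf : 0 < f.totalDegree)
    (hdec : ¬ (MvPolynomial.map (algebraMap F (AlgebraicClosure F)) f).Decomposable) :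
    Irreducible
          (MvPolynomial.map (algebraMap F (AlgebraicClosure (RatFunc F))) f
            - MvPolynomial.C
                (algebraMap (RatFunc F) (AlgebraicClosure (RatFunc F)) RatFunc.X)) := by
  let K := AlgebraicClosure F
  let fK : MvPolynomial (Fin n) K := map (algebraMap F K) f
  have hfK : 0 < fK.totalDegree := by
    rwa [totalDegree_map_aux _ (algebraMap F K).injective]
  have : Infinite K := inferInstance
  have hint := indec_aux fK hfK hdec
  have hinj : Function.Injective (algebraMap (MvPolynomial (Fin n) K)
      (AlgebraicClosure (FractionRing (MvPolynomial (Fin n) K)))) := by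
    rw [IsScalarTower.algebraMap_eq (MvPolynomial (Fin n) K)
      (FractionRing (MvPolynomial (Fin n) K)) _]
    exact (algebraMap (FractionRing (MvPolynomial (Fin n) K))
      (AlgebraicClosure (FractionRing (MvPolynomial (Fin n) K)))).injective.comp (IsFractionRing.injective (MvPolynomial (Fin n) K) _)
  have hfs : FaithfulSMul (Algebra.adjoin K {fK})
      (AlgebraicClosure (FractionRing (MvPolynomial (Fin n) K))) := by
    rw [faithfulSMul_iff_algebraMap_injective]
    exact hinj.comp Subtype.val_injective
  obtain ⟨k, i1, i2, i3, i4, i5⟩ := frac_exists_aux (Algebra.adjoin K {fK})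
    (AlgebraicClosure (FractionRing (MvPolynomial (Fin n) K))) 
  exact mp_core f hf fK rfl (k := k)
    (N := FractionRing (MvPolynomial (Fin n) K))
    (Ω := AlgebraicClosure (FractionRing (MvPolynomial (Fin n) K))) hinj hint

/-- **Indecomposability is equivalent to irreducibility of `f − t`.**
Let `f ∈ F[x₁,…,xₙ]` be a non-constant polynomial over a field `F`, let `F̄` be an
algebraic closure of `F`, and let `Ω` be an algebraic closure of the rational function
field `F(t)`. Then `f` is indecomposable over `F̄` if and only if `f − t` is irreducible
in `Ω[x₁,…,xₙ]`. -/
theorem indecomposable_iff_sub_t_irreducible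
    (F : Type) [Field F] (n : ℕ) (hn : 1 ≤ n)
    (f : MvPolynomial (Fin n) F) (hf : 0 < f.totalDegree) :
    (¬ (MvPolynomial.map (algebraMap F (AlgebraicClosure F)) f).Decomposable)
      ↔ Irreducible
          (MvPolynomial.map (algebraMap F (AlgebraicClosure (RatFunc F))) f
            - MvPolynomial.C
                (algebraMap (RatFunc F) (AlgebraicClosure (RatFunc F)) RatFunc.X)) := by
  exact ⟨mp_aux F n f hf, mpr_aux F n f hf⟩
end

section
/- Let d ≥ 1 and let F be a field whose characteristic is either zero or greater than d. Let f ∈ F[x_1,…,x_n,y] be a polynomial of total degree d. Then there exists a nonzero polynomial B ∈ F[x_1,…,x_n] of total degree at most d such that for every a = (a_1,…,a_n) ∈ F^n with B(a) ≠ 0, the polynomial s_a(f) − t ∈ F(t)[x_1,…,x_n,y] equals c·g, where c ∈ F is nonzero and g ∈ F(t)[x_1,…,x_n,y] is a polynomial of total degree d satisfying Hypothesis (H) over F(t) (here s_a(f) := f(x_1 + a_1·y, …, x_n + a_n·y, y) and t is a new variable). -/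
open MvPolynomial

/-- The Sylvester matrix of `f` and `g` with respect to degrees `d₁` and `d₂`: the
`(d₁+d₂) × (d₁+d₂)` matrix whose first `d₂` columns are the shifted coefficient vectors
of `f` and whose last `d₁` columns are the shifted coefficient vectors of `g`. -/
def sylvesterMatrix {R : Type*} [CommRing R] (d₁ d₂ : ℕ) (f g : Polynomial R) :
    Matrix (Fin (d₁ + d₂)) (Fin (d₁ + d₂)) R :=
  Matrix.of fun i j =>
    if (j : ℕ) < d₂ then
      (if (j : ℕ) ≤ (i : ℕ) then f.coeff ((i : ℕ) - (j : ℕ)) else 0)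
    else
      (if (j : ℕ) - d₂ ≤ (i : ℕ) then g.coeff ((i : ℕ) - ((j : ℕ) - d₂)) else 0)

/-- The resultant of two univariate polynomials `f` and `g`: the determinant of their
Sylvester matrix (taken with respect to their degrees). -/
noncomputable def resultant {R : Type*} [CommRing R] (f g : Polynomial R) : R :=
  (sylvesterMatrix f.natDegree g.natDegree f g).det

/-- The `K`-algebra map `K[x₁,…,xₙ,y] → K[y]` evaluating at `x₁ = ⋯ = xₙ = 0` (the
variable `y` is encoded as `none`, and `xᵢ` as `some i`), i.e. `f ↦ f(0,…,0,y)`. -/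
noncomputable def atZero {K : Type*} [CommSemiring K] {n : ℕ} :
    MvPolynomial (Option (Fin n)) K →ₐ[K] Polynomial K :=
  aeval fun v => v.elim Polynomial.X (fun _ => 0)

/-- `f ∈ K[x₁,…,xₙ,y]` satisfies **Hypothesis (H)** if (1) `f` is monic in `y` and
`deg_y f = deg f`, and (2) `Res(f(0,…,0,y), (∂f/∂y)(0,…,0,y)) ≠ 0`. -/
def SatisfiesHypH {K : Type*} [Field K] {n : ℕ}
    (f : MvPolynomial (Option (Fin n)) K) : Prop :=
  ((optionEquivLeft K (Fin n)) f).Monic ∧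
  ((optionEquivLeft K (Fin n)) f).natDegree = f.totalDegree ∧
  resultant (atZero f) (atZero ((pderiv none) f)) ≠ 0

/-- For `a = (a₁,…,aₙ) ∈ Fⁿ`, the `F`-algebra endomorphism `s_a` of
`F[x₁,…,xₙ,y]` fixing `y` and sending `xᵢ` to `xᵢ + aᵢ·y`. -/
noncomputable def sA {F : Type*} [CommSemiring F] {n : ℕ} (a : Fin n → F) :
    MvPolynomial (Option (Fin n)) F →ₐ[F] MvPolynomial (Option (Fin n)) F :=
  aeval fun v => v.elim (X none) (fun i => X (some i) + C (a i) * X none)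

theorem resultant_eq_aux {R : Type*} [CommRing R] (f g : Polynomial R) :
    resultant f g = Polynomial.resultant g f := by
  unfold resultant Polynomial.resultant
  rw [← Matrix.det_reindex_self (finCongr (add_comm g.natDegree f.natDegree))]
  congr 1
  ext i j
  simp only [Matrix.reindex_apply, Matrix.submatrix_apply, sylvesterMatrix, Polynomial.sylvester,
    Matrix.of_apply]
  obtain ⟨j', rfl⟩ := (finCongr (add_comm g.natDegree f.natDegree)).surjective j
  rw [Equiv.symm_apply_apply]
  induction j' using Fin.addCases with
  | left j =>
    simp only [Fin.addCases_left]
    have := j.2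
    simp [this]
    by_cases h1 : (j : ℕ) ≤ i
    · by_cases h2 : (i : ℕ) ≤ j + f.natDegree
      · simp [h1, h2]
      · simp [h1, h2]
        apply Polynomial.coeff_eq_zero_of_natDegree_lt
        omega
    · simp [h1]
  | right j =>
    simp only [Fin.addCases_right]
    simp
    by_cases h1 : (j : ℕ) ≤ i
    · by_cases h2 : (i : ℕ) ≤ j + g.natDegree
      · simp [h1, h2]
      · simp [h1, h2]
        apply Polynomial.coeff_eq_zero_of_natDegree_lt
        omega
    · simp [h1]

theorem isCoprime_aux {F : Type*} [Field F] (q : Polynomial F)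
    (hq : Polynomial.derivative q ≠ 0) :
    IsCoprime (q.map (algebraMap F (RatFunc F)) - Polynomial.C RatFunc.X)
      ((Polynomial.derivative q).map (algebraMap F (RatFunc F))) := by
  rw [Polynomial.isCoprime_iff_aeval_ne_zero_of_isAlgClosed _ (AlgebraicClosure (RatFunc F))]
  intro α
  by_contra! h
  obtain ⟨h1, h2⟩ := h
  rw [Polynomial.aeval_map_algebraMap] at h2
  rw [map_sub, Polynomial.aeval_map_algebraMap, Polynomial.aeval_C, sub_eq_zero] at h1
  have ha : IsAlgebraic F α := ⟨_, hq, h2⟩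
  have hb : IsAlgebraic F (Polynomial.aeval α q) := by
    rw [isAlgebraic_iff_isIntegral] at ha ⊢
    exact IsIntegral.of_mem_of_fg _ ha.fg_adjoin_singleton _
      (Polynomial.aeval_mem_adjoin_singleton _ _)
  rw [h1, isAlgebraic_algebraMap_iff (algebraMap (RatFunc F) (AlgebraicClosure (RatFunc F))).injective] at hb
  exact RatFunc.transcendental_X hb

theorem atZero_eq_aux {K : Type*} [Field K] {n : ℕ} (p : MvPolynomial (Option (Fin n)) K) :
    atZero p = ((optionEquivLeft K (Fin n)) p).map constantCoeff := by
  have : (atZero : MvPolynomial (Option (Fin n)) K →ₐ[K] Polynomial K).toRingHom =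
      (Polynomial.mapRingHom constantCoeff).comp (optionEquivLeft K (Fin n)).toRingHom := by
    apply MvPolynomial.ringHom_ext
    · intro r; simp [atZero, optionEquivLeft_C, ← Polynomial.C_eq_algebraMap]
    · rintro (_ | i) <;> simp [atZero, optionEquivLeft_X_some, optionEquivLeft_X_none]
  exact congrArg (fun h => h p) this

theorem atZero_map_aux {K L : Type*} [Field K] [Field L] [Algebra K L] {n : ℕ}
    (p : MvPolynomial (Option (Fin n)) K) :
    atZero (MvPolynomial.map (algebraMap K L) p) = (atZero p).map (algebraMap K L) := by
  induction p using MvPolynomial.induction_on with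
  | C r => simp [atZero]
  | add p q hp hq => simp [hp, hq]
  | mul_X p i hp =>
    rw [map_mul, map_mul, map_mul, hp, Polynomial.map_mul]
    rcases i with _ | i <;> simp [atZero]

theorem atZero_pderiv_aux {K : Type*} [Field K] {n : ℕ}
    (p : MvPolynomial (Option (Fin n)) K) :
    atZero (pderiv none p) = Polynomial.derivative (atZero p) := by
  induction p using MvPolynomial.induction_on with
  | C r => simp [atZero]
  | add p q hp hq => simp [hp, hq]
  | mul_X p i hp =>
    rw [Derivation.leibniz, map_mul, Polynomial.derivative_mul, ← hp]
    rcases i with _ | i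
    · simp [atZero]; ring
    · simp [atZero, pderiv_X]

theorem totalDegree_sA_le {K : Type*} [Field K] {n : ℕ} (a : Fin n → K)
    (p : MvPolynomial (Option (Fin n)) K) : (sA a p).totalDegree ≤ p.totalDegree := by
  unfold sA
  rw [aeval_def, eval₂_eq]
  refine totalDegree_finsetSum_le fun m hm => ?_
  rw [algebraMap_eq]
  refine (totalDegree_mul _ _).trans ?_
  rw [totalDegree_C, zero_add]
  refine (totalDegree_finsetProd _ _).trans ?_
  refine le_trans ?_ (le_totalDegree hm)
  rw [Finsupp.sum]
  refine Finset.sum_le_sum fun v _ => ?_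
  refine (totalDegree_pow _ _).trans ?_
  refine le_trans (Nat.mul_le_mul_left _ (?_ : _ ≤ 1)) (by simp)
  rcases v with _ | i
  · simp
  · refine (totalDegree_add _ _).trans ?_
    refine max_le (by simp) ?_
    refine (totalDegree_mul _ _).trans ?_
    simp

/-- The polynomial `f_d(x, 1)`. -/
noncomputable def topB {K : Type*} [Field K] {n : ℕ} (d : ℕ)
    (p : MvPolynomial (Option (Fin n)) K) : MvPolynomial (Fin n) K :=
  ∑ m ∈ p.support with m.degree = d, monomial m.some (coeff m p)

theorem coeff_atZero_sA {K : Type*} [Field K] {n : ℕ} (d : ℕ) (a : Fin n → K)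
    (p : MvPolynomial (Option (Fin n)) K) :
    (atZero (sA a p)).coeff d = eval a (topB d p) := by
  have h : atZero (sA a p) =
      ∑ m ∈ p.support, Polynomial.monomial m.degree (eval a (monomial m.some (coeff m p))) := by
    have : atZero (sA a p) = aeval (fun v : Option (Fin n) => v.elim Polynomial.X
        (fun i => Polynomial.C (a i) * Polynomial.X)) p := by
      rw [← AlgHom.comp_apply]
      congr 1
      apply MvPolynomial.algHom_ext
      rintro (_ | i) <;> simp [atZero, sA]
    rw [this, aeval_def, eval₂_eq']
    refine Finset.sum_congr rfl fun m _ => ?_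
    rw [Fintype.prod_option, eval_monomial, Finsupp.prod_fintype _ _ (by simp)]
    rw [Finsupp.degree_eq_sum, Fintype.sum_option, ← Polynomial.C_mul_X_pow_eq_monomial]
    simp [mul_pow, Finset.prod_mul_distrib, Finset.prod_pow_eq_pow_sum, pow_add]
    ring
  rw [h, topB, map_sum, Polynomial.finsetSum_coeff, Finset.sum_filter]
  refine Finset.sum_congr rfl fun m _ => ?_
  rw [Polynomial.coeff_monomial]

theorem topB_ne_zero {K : Type*} [Field K] {n : ℕ} (p : MvPolynomial (Option (Fin n)) K)
    (hp : p ≠ 0) : topB p.totalDegree p ≠ 0 := by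
  obtain ⟨m, hm, hm'⟩ := Finset.exists_mem_eq_sup p.support (by simpa using hp)
    (fun m => m.degree)
  have hmd : m.degree = p.totalDegree := by
    rw [← hm']; rfl
  intro h0
  have h1 : coeff m.some (topB p.totalDegree p) = coeff m p := by
    unfold topB
    rw [coeff_sum, Finset.sum_eq_single m]
    · simp
    · intro k hk hkm
      rw [coeff_monomial, if_neg]
      intro hs
      apply hkm
      have hkd : k.degree = m.degree := by
        rw [hmd]; exact (Finset.mem_filter.1 hk).2
      rw [Finsupp.degree_eq_sum, Finsupp.degree_eq_sum, Fintype.sum_option,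
        Fintype.sum_option] at hkd
      have hs' : ∀ i, k (some i) = m (some i) := fun i => DFunLike.congr_fun hs i
      simp only [hs'] at hkd
      ext v
      rcases v with _ | i
      · omega
      · exact hs' i
    · intro hn
      exact absurd (Finset.mem_filter.2 ⟨hm, hmd⟩) hn
  rw [h0, coeff_zero] at h1
  exact (mem_support_iff.1 hm) h1.symm

theorem totalDegree_topB_le {K : Type*} [Field K] {n : ℕ} (d : ℕ)
    (p : MvPolynomial (Option (Fin n)) K) : (topB d p).totalDegree ≤ d := by
  refine totalDegree_finsetSum_le fun m hm => ?_
  refine (totalDegree_monomial_le _ _).trans ?_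
  rw [← (Finset.mem_filter.1 hm).2, Finsupp.degree_eq_sum, Fintype.sum_option,
    Finsupp.sum_fintype _ _ (by simp)]
  simp

theorem monic_aux {K : Type*} [Field K] {n : ℕ} (d : ℕ)
    (g : MvPolynomial (Option (Fin n)) K) (hg : g.totalDegree ≤ d)
    (h1 : (atZero g).coeff d = 1) :
    g.totalDegree = d ∧ ((optionEquivLeft K (Fin n)) g).Monic ∧
      ((optionEquivLeft K (Fin n)) g).natDegree = d := by
  have hle : ((optionEquivLeft K (Fin n)) g).natDegree ≤ g.totalDegree := by
    rw [natDegree_optionEquivLeft]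
    exact degreeOf_le_totalDegree _ _
  have h2 : coeff 0 (((optionEquivLeft K (Fin n)) g).coeff d) = 1 := by
    rw [atZero_eq_aux, Polynomial.coeff_map] at h1
    exact h1
  have hc : ((optionEquivLeft K (Fin n)) g).coeff d = 1 := by
    ext m
    by_cases hm : m = 0
    · subst hm; rw [h2]; simp
    · rw [coeff_one, if_neg (Ne.symm hm)]
      by_contra hne
      have := (mem_support_coeff_optionEquivLeft _).1 (mem_support_iff.2 hne)
      have := (le_totalDegree this).trans hg
      rw [Finsupp.sum_fintype _ _ (by simp), Fintype.sum_option] at this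
      simp at this
      exact hm (Finsupp.ext this)
  have hge : d ≤ ((optionEquivLeft K (Fin n)) g).natDegree := by
    apply Polynomial.le_natDegree_of_ne_zero
    rw [hc]; exact one_ne_zero
  have hn : ((optionEquivLeft K (Fin n)) g).natDegree = d := by omega
  refine ⟨by omega, ?_, hn⟩
  rw [Polynomial.Monic, Polynomial.leadingCoeff, hn, hc]

/-- **Reducing to Hypothesis (H).**
Let `d ≥ 1` and let `F` be a field of characteristic zero or greater than `d`, and let
`f ∈ F[x₁,…,xₙ,y]` have total degree `d`. Then there exists a nonzero polynomial
`B ∈ F[x₁,…,xₙ]` of total degree at most `d` such that for every `a ∈ Fⁿ` with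
`B(a) ≠ 0`, the polynomial `s_a(f) − t ∈ F(t)[x₁,…,xₙ,y]` equals `c·g` for some nonzero
`c ∈ F` and some `g ∈ F(t)[x₁,…,xₙ,y]` of total degree `d` satisfying Hypothesis (H). -/
theorem exists_good_change_to_hypothesis_H
    (F : Type) [Field F] (n d : ℕ) (hd : 1 ≤ d)
    (hchar : ringChar F = 0 ∨ d < ringChar F)
    (f : MvPolynomial (Option (Fin n)) F) (hdeg : f.totalDegree = d) :
    ∃ B : MvPolynomial (Fin n) F, B ≠ 0 ∧ B.totalDegree ≤ d ∧
      ∀ a : Fin n → F, eval a B ≠ 0 →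
        ∃ (c : F) (g : MvPolynomial (Option (Fin n)) (RatFunc F)),
          c ≠ 0 ∧ g.totalDegree = d ∧ SatisfiesHypH g ∧
          MvPolynomial.map (algebraMap F (RatFunc F)) (sA a f)
              - MvPolynomial.C RatFunc.X
            = MvPolynomial.C (algebraMap F (RatFunc F) c) * g := by
  have hf0 : f ≠ 0 := by
    rintro rfl
    simp at hdeg
    omega
  refine ⟨topB d f, ?_, totalDegree_topB_le d f, ?_⟩
  · rw [← hdeg]; exact topB_ne_zero f hf0
  intro a ha
  set c := eval a (topB d f) with hc
  set φ := algebraMap F (RatFunc F) with hφ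
  have hcφ : φ c ≠ 0 := by simpa using ha
  set q := atZero (sA a f) with hq
  have hqd : q.coeff d = c := coeff_atZero_sA d a f
  set g : MvPolynomial (Option (Fin n)) (RatFunc F) :=
    C (φ c)⁻¹ * (MvPolynomial.map φ (sA a f) - C RatFunc.X) with hg
  have hgd : g.totalDegree ≤ d := by
    refine (totalDegree_mul _ _).trans ?_
    rw [totalDegree_C, zero_add]
    refine (totalDegree_sub _ _).trans ?_
    rw [totalDegree_C]
    refine max_le ?_ (Nat.zero_le _)
    rw [← hdeg]
    exact (Finset.sup_mono (support_map_subset _ _)).trans (totalDegree_sA_le a f)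
  have hg0 : atZero g = Polynomial.C (φ c)⁻¹ * (q.map φ - Polynomial.C RatFunc.X) := by
    rw [hg, map_mul, map_sub, hφ, atZero_map_aux]
    simp [atZero, hq, Polynomial.C_eq_algebraMap]
  have hg1 : (atZero g).coeff d = 1 := by
    rw [hg0, Polynomial.coeff_C_mul, Polynomial.coeff_sub, Polynomial.coeff_map, hqd,
      Polynomial.coeff_C, if_neg (by omega), sub_zero, inv_mul_cancel₀ hcφ]
  obtain ⟨e1, e2, e3⟩ := monic_aux d g hgd hg1
  have hq' : Polynomial.derivative q ≠ 0 := by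
    intro h
    have := congrArg (fun p => Polynomial.coeff p (d - 1)) h
    simp only [Polynomial.coeff_derivative, Polynomial.coeff_zero] at this
    rw [Nat.sub_add_cancel hd, hqd] at this
    have hd0 : ((d : ℕ) : F) = 0 := by
      rcases mul_eq_zero.1 this with h | h
      · exact absurd h ha
      · have : ((d - 1 : ℕ) : F) + 1 = ((d - 1 + 1 : ℕ) : F) := by push_cast; rfl
        rw [this, Nat.sub_add_cancel hd] at h
        exact h
    rw [ringChar.spec] at hd0
    rcases hchar with h0 | h0
    · rw [h0, zero_dvd_iff] at hd0; omega
    · have := Nat.le_of_dvd hd hd0; omega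
  refine ⟨c, g, ha, e1, ⟨e2, e3.trans e1.symm, ?_⟩, ?_⟩
  · rw [resultant_eq_aux, atZero_pderiv_aux, hg0]
    apply Polynomial.resultant_ne_zero
    have hu : IsUnit (Polynomial.C (φ c)⁻¹) :=
      Polynomial.isUnit_C.2 (IsUnit.mk0 _ (inv_ne_zero hcφ))
    rw [Polynomial.derivative_C_mul, Polynomial.derivative_sub, Polynomial.derivative_C,
      sub_zero, Polynomial.derivative_map]
    rw [isCoprime_mul_unit_left hu]
    exact (isCoprime_aux q hq').symm
  · rw [hg, ← mul_assoc, ← C_mul, mul_inv_cancel₀ hcφ, C_1, one_mul]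
end

section
/- Let d ≥ 1 and let K be an algebraically closed field whose characteristic is either zero or greater than d(d−1). Let f ∈ K[x_1,…,x_n,y] be an irreducible polynomial of total degree d satisfying Hypothesis (H). Set m = 2^{d−1} − 1. Then there exist nonzero polynomials Q_1,…,Q_m ∈ K[z_1,…,z_n], each of total degree at most 2d−1, such that for every a = (a_1,…,a_n) ∈ K^n for which the bivariate polynomial f(a_1·x, …, a_n·x, y) ∈ K[x,y] is not irreducible, there is some i ∈ {1,…,m} with Q_i(a) = 0. -/
open MvPolynomial

/-- The `K`-algebra map `K[x₁,…,xₙ,y] → K[x,y]` sending `xᵢ ↦ aᵢ·x` and `y ↦ y`,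
i.e. `f ↦ f(a₁x, …, aₙx, y)`; in `K[x,y] = MvPolynomial (Fin 2) K`, `x` is `X 0` and
`y` is `X 1`. -/
noncomputable def restrictLine {K : Type*} [CommSemiring K] {n : ℕ} (a : Fin n → K) :
    MvPolynomial (Option (Fin n)) K →ₐ[K] MvPolynomial (Fin 2) K :=
  aeval fun v => v.elim (X 1) (fun i => C (a i) * X 0)



namespace Bertini

/-- The Euler derivation `t d/dt` on power series. -/
noncomputable def eu (R : Type*) [CommRing R] : Derivation R (PowerSeries R) (PowerSeries R) :=
  (PowerSeries.X : PowerSeries R) • PowerSeries.derivative R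

lemma coeff_eu {R : Type*} [CommRing R] (φ : PowerSeries R) (k : ℕ) :
    PowerSeries.coeff k (eu R φ) = (k : R) * PowerSeries.coeff k φ := by
  cases k with
  | zero => simp [eu]
  | succ k =>
    simp [eu, PowerSeries.coeff_succ_X_mul, PowerSeries.coeff_derivative, mul_comm]

/-- Coefficientwise Euler derivation. -/
noncomputable def Em {R : Type*} [CommRing R] (P : Polynomial (PowerSeries R)) :
    Polynomial (PowerSeries R) :=
  PolynomialModule.equivPolynomialSelf ((eu R).mapCoeffs P)

lemma coeff_Em {R : Type*} [CommRing R] (P : Polynomial (PowerSeries R)) (j : ℕ) :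
    (Em P).coeff j = eu R (P.coeff j) := rfl

lemma Em_mul {R : Type*} [CommRing R] (P Q : Polynomial (PowerSeries R)) :
    Em (P * Q) = Em P * Q + P * Em Q := by
  simp only [Em, Derivation.leibniz, map_add, map_smul, smul_eq_mul]
  ring

lemma Em_sub {R : Type*} [CommRing R] (P Q : Polynomial (PowerSeries R)) :
    Em (P - Q) = Em P - Em Q := by
  simp [Em]

lemma Em_derivative {R : Type*} [CommRing R] (P : Polynomial (PowerSeries R)) :
    Em (Polynomial.derivative P) = Polynomial.derivative (Em P) := by
  ext j k
  simp only [coeff_Em, Polynomial.coeff_derivative, coeff_eu]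
  have h : ((j : PowerSeries R) + 1) = PowerSeries.C ((j : R) + 1) := by simp
  simp only [h, PowerSeries.coeff_mul_C, coeff_eu]
  ring

lemma eu_eval {R : Type*} [CommRing R] (P : Polynomial (PowerSeries R)) (φ : PowerSeries R) :
    eu R (P.eval φ) = (Em P).eval φ + (Polynomial.derivative P).eval φ * eu R φ := by
  induction P using Polynomial.induction_on' with
  | add p q hp hq =>
    have : Em (p + q) = Em p + Em q := by simp [Em]
    simp only [Polynomial.eval_add, map_add, hp, hq, this]
    ring
  | monomial n a =>
    have : Em (Polynomial.monomial n a) = Polynomial.monomial n (eu R a) := by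
      ext1 j
      rw [coeff_Em, Polynomial.coeff_monomial, Polynomial.coeff_monomial]
      split_ifs <;> simp
    simp [this, Polynomial.derivative_monomial, Derivation.leibniz, Derivation.leibniz_pow]
    ring

/-- Total degree at most `N` for elements of `R⟦t⟧[y]`. -/
def TD {R : Type*} [CommRing R] (N : ℕ) (P : Polynomial (PowerSeries R)) : Prop :=
  ∀ j k, N < j + k → PowerSeries.coeff k (P.coeff j) = 0

lemma TD.mul {R : Type*} [CommRing R] {M N : ℕ} {P Q : Polynomial (PowerSeries R)}
    (hP : TD M P) (hQ : TD N Q) : TD (M + N) (P * Q) := by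
  intro j k h
  rw [Polynomial.coeff_mul, map_sum]
  refine Finset.sum_eq_zero fun x hx => ?_
  rw [PowerSeries.coeff_mul]
  refine Finset.sum_eq_zero fun y hy => ?_
  rw [Finset.HasAntidiagonal.mem_antidiagonal] at hx hy
  by_cases h1 : M < x.1 + y.1
  · rw [hP _ _ h1, zero_mul]
  · rw [hQ _ _ (by omega), mul_zero]

lemma TD.add {R : Type*} [CommRing R] {N : ℕ} {P Q : Polynomial (PowerSeries R)}
    (hP : TD N P) (hQ : TD N Q) : TD N (P + Q) := by
  intro j k h
  rw [Polynomial.coeff_add, map_add, hP _ _ h, hQ _ _ h, add_zero]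

lemma TD.sub {R : Type*} [CommRing R] {N : ℕ} {P Q : Polynomial (PowerSeries R)}
    (hP : TD N P) (hQ : TD N Q) : TD N (P - Q) := by
  intro j k h
  rw [Polynomial.coeff_sub, map_sub, hP _ _ h, hQ _ _ h, sub_zero]

lemma TD.mono {R : Type*} [CommRing R] {M N : ℕ} {P : Polynomial (PowerSeries R)}
    (hP : TD M P) (h : M ≤ N) : TD N P := fun j k hjk => hP j k (by omega)

lemma TD.em {R : Type*} [CommRing R] {N : ℕ} {P : Polynomial (PowerSeries R)}
    (hP : TD N P) : TD N (Em P) := by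
  intro j k h
  rw [coeff_Em, coeff_eu, hP _ _ h, mul_zero]

lemma coeff_coeff_derivative {R : Type*} [CommRing R] (P : Polynomial (PowerSeries R)) (j k : ℕ) :
    PowerSeries.coeff k ((Polynomial.derivative P).coeff j) =
      PowerSeries.coeff k (P.coeff (j + 1)) * ((j : R) + 1) := by
  have h : ((j : PowerSeries R) + 1) = PowerSeries.C ((j : R) + 1) := by simp
  rw [Polynomial.coeff_derivative, h, PowerSeries.coeff_mul_C]

lemma TD.deriv {R : Type*} [CommRing R] {N : ℕ} {P : Polynomial (PowerSeries R)}
    (hP : TD N P) : TD (N - 1) (Polynomial.derivative P) := by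
  intro j k h
  rw [coeff_coeff_derivative, hP _ _ (by omega), zero_mul]

/-- Weighted degree condition. -/
def WS {σ K : Type*} [Field K] (φ : PowerSeries (MvPolynomial σ K)) : Prop :=
  ∀ k, (PowerSeries.coeff k φ).totalDegree ≤ k

lemma WS.add {σ K : Type*} [Field K] {φ ψ : PowerSeries (MvPolynomial σ K)}
    (h1 : WS φ) (h2 : WS ψ) : WS (φ + ψ) := by
  intro k
  rw [map_add]
  exact (totalDegree_add _ _).trans (max_le (h1 k) (h2 k))

lemma WS.sub {σ K : Type*} [Field K] {φ ψ : PowerSeries (MvPolynomial σ K)}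
    (h1 : WS φ) (h2 : WS ψ) : WS (φ - ψ) := by
  intro k
  rw [map_sub]
  exact (totalDegree_sub _ _).trans (max_le (h1 k) (h2 k))

lemma WS.mul {σ K : Type*} [Field K] {φ ψ : PowerSeries (MvPolynomial σ K)}
    (h1 : WS φ) (h2 : WS ψ) : WS (φ * ψ) := by
  intro k
  rw [PowerSeries.coeff_mul]
  refine totalDegree_finsetSum_le fun x hx => ?_
  rw [Finset.HasAntidiagonal.mem_antidiagonal] at hx
  refine (totalDegree_mul _ _).trans ?_
  have := h1 x.1
  have := h2 x.2
  omega

lemma WS.zero {σ K : Type*} [Field K] : WS (0 : PowerSeries (MvPolynomial σ K)) := by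
  intro k; simp

lemma WS.C {σ K : Type*} [Field K] (c : K) :
    WS (PowerSeries.C (MvPolynomial.C c) : PowerSeries (MvPolynomial σ K)) := by
  intro k
  rw [PowerSeries.coeff_C]
  split_ifs <;> simp

lemma WS.one {σ K : Type*} [Field K] : WS (1 : PowerSeries (MvPolynomial σ K)) := by
  simpa using WS.C (σ := σ) (1 : K)

lemma WS.pow {σ K : Type*} [Field K] {φ : PowerSeries (MvPolynomial σ K)}
    (h1 : WS φ) (n : ℕ) : WS (φ ^ n) := by
  induction n with
  | zero => simpa using WS.one
  | succ n ih => rw [pow_succ]; exact ih.mul h1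

lemma WS.sum {σ K ι : Type*} [Field K] (s : Finset ι) (φ : ι → PowerSeries (MvPolynomial σ K))
    (h : ∀ i ∈ s, WS (φ i)) : WS (∑ i ∈ s, φ i) := by
  classical
  induction s using Finset.induction_on with
  | empty => simpa using WS.zero
  | insert a s ha ih =>
    rw [Finset.sum_insert ha]
    exact (h a (by simp)).add (ih fun i hi => h i (by simp [hi]))

/-- Weighted degree condition for polynomials. -/
def WD {σ K : Type*} [Field K] (P : Polynomial (PowerSeries (MvPolynomial σ K))) : Prop :=
  ∀ j, WS (P.coeff j)

lemma WD.eval {σ K : Type*} [Field K] {P : Polynomial (PowerSeries (MvPolynomial σ K))}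
    (h : WD P) {φ : PowerSeries (MvPolynomial σ K)} (hφ : WS φ) : WS (P.eval φ) := by
  rw [Polynomial.eval_eq_sum, Polynomial.sum]
  exact WS.sum _ _ fun i _ => (h i).mul (hφ.pow i)

lemma WD.add {σ K : Type*} [Field K] {P Q : Polynomial (PowerSeries (MvPolynomial σ K))}
    (h1 : WD P) (h2 : WD Q) : WD (P + Q) := by
  intro j; rw [Polynomial.coeff_add]; exact (h1 j).add (h2 j)

lemma WD.mul {σ K : Type*} [Field K] {P Q : Polynomial (PowerSeries (MvPolynomial σ K))}
    (h1 : WD P) (h2 : WD Q) : WD (P * Q) := by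
  intro j; rw [Polynomial.coeff_mul]
  exact WS.sum _ _ fun x _ => (h1 x.1).mul (h2 x.2)

lemma WD.X {σ K : Type*} [Field K] :
    WD (Polynomial.X : Polynomial (PowerSeries (MvPolynomial σ K))) := by
  intro j; rw [Polynomial.coeff_X]; split_ifs
  · exact WS.one
  · exact WS.zero

lemma WD.C {σ K : Type*} [Field K] {φ : PowerSeries (MvPolynomial σ K)} (h : WS φ) :
    WD (Polynomial.C φ) := by
  intro j; rw [Polynomial.coeff_C]; split_ifs
  · exact h
  · exact WS.zero

lemma WD.X_sub_C {σ K : Type*} [Field K] {φ : PowerSeries (MvPolynomial σ K)} (h : WS φ) :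
    WD (Polynomial.X - Polynomial.C φ) := by
  intro j; rw [Polynomial.coeff_sub]; exact (WD.X j).sub (WD.C h j)

lemma WD.prod {σ K ι : Type*} [Field K] (s : Finset ι)
    (P : ι → Polynomial (PowerSeries (MvPolynomial σ K)))
    (h : ∀ i, WD (P i)) : WD (∏ i ∈ s, P i) := by
  classical
  induction s using Finset.induction_on with
  | empty => simpa using WD.C (σ := σ) (K := K) WS.one
  | insert a s ha ih =>
    rw [Finset.prod_insert ha]
    exact (h a).mul ih

lemma WD.deriv {σ K : Type*} [Field K] {P : Polynomial (PowerSeries (MvPolynomial σ K))}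
    (h : WD P) : WD (Polynomial.derivative P) := by
  intro j k
  rw [coeff_coeff_derivative]
  refine (totalDegree_mul _ _).trans ?_
  have h2 : ((j : MvPolynomial σ K) + 1) = MvPolynomial.C ((j : K) + 1) := by simp
  rw [h2, totalDegree_C, add_zero]
  exact h _ _

lemma WD.em {σ K : Type*} [Field K] {P : Polynomial (PowerSeries (MvPolynomial σ K))}
    (h : WD P) : WD (Em P) := by
  intro j k
  rw [coeff_Em, coeff_eu]
  refine (totalDegree_mul _ _).trans ?_
  have h2 : (k : MvPolynomial σ K) = MvPolynomial.C (k : K) := by simp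
  rw [h2, totalDegree_C, zero_add]
  exact h _ _


lemma exists_trunc {R : Type*} [CommRing R] (N : ℕ) (P : Polynomial (PowerSeries R)) :
    ∃ T U : Polynomial (PowerSeries R), P = T + Polynomial.C (PowerSeries.X ^ N) * U ∧
      ∀ j k, PowerSeries.coeff k (T.coeff j) =
        if k < N then PowerSeries.coeff k (P.coeff j) else 0 := by
  let U : Polynomial (PowerSeries R) := ∑ j ∈ P.support, Polynomial.monomial j
    (PowerSeries.mk fun k => PowerSeries.coeff (k + N) (P.coeff j))
  have hU : ∀ j, U.coeff j = PowerSeries.mk fun k => PowerSeries.coeff (k + N) (P.coeff j) := by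
    intro j
    simp only [U, Polynomial.finsetSum_coeff, Polynomial.coeff_monomial]
    rw [Finset.sum_ite_eq']
    split_ifs with h
    · rfl
    · rw [Polynomial.notMem_support_iff] at h
      ext k
      simp [h]
  refine ⟨P - Polynomial.C (PowerSeries.X ^ N) * U, U, by ring, fun j k => ?_⟩
  rw [Polynomial.coeff_sub, Polynomial.coeff_C_mul, map_sub, PowerSeries.coeff_X_pow_mul', hU]
  split_ifs with h1 h2 h2
  · omega
  · simp [Nat.sub_add_cancel h1]
  · simp
  · omega

lemma Em_X_pow_mul {R : Type*} [CommRing R] (N : ℕ) (U : Polynomial (PowerSeries R)) :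
    ∃ V, Em (Polynomial.C (PowerSeries.X ^ N) * U) = Polynomial.C (PowerSeries.X ^ N) * V := by
  refine ⟨Em U + Polynomial.C (N : PowerSeries R) * U, ?_⟩
  ext j k
  rw [coeff_Em, coeff_eu]
  simp only [Polynomial.coeff_C_mul, PowerSeries.coeff_X_pow_mul', Polynomial.coeff_add,
    coeff_Em, map_add, coeff_eu]
  have h : (N : PowerSeries R) = PowerSeries.C (N : R) := by simp
  split_ifs with hk
  · rw [h, PowerSeries.coeff_C_mul, Nat.cast_sub hk]; ring
  · simp

lemma eq_zero_of_TD {R : Type*} [CommRing R] {N : ℕ} {P W : Polynomial (PowerSeries R)}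
    (hP : TD N P) (h : P = Polynomial.C (PowerSeries.X ^ (N + 1)) * W) : P = 0 := by
  ext j k
  by_cases hk : k ≤ N
  · rw [h, Polynomial.coeff_C_mul, PowerSeries.coeff_X_pow_mul', if_neg (by omega)]; simp
  · rw [hP j k (by omega)]; simp

/-- The key exactness argument. -/
lemma key_exact {R : Type*} [CommRing R] [IsDomain R] {d : ℕ} (hd : 1 ≤ d)
    (F P Q : Polynomial (PowerSeries R)) (hF : F = P * Q) (hT : TD d F)
    (hG : ∀ j k, k < 2 * d → d - 1 < j + k →
      PowerSeries.coeff k ((Polynomial.derivative P * Q).coeff j) = 0)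
    (hH : ∀ j k, k < 2 * d → d < j + k →
      PowerSeries.coeff k ((Em P * Q).coeff j) = 0) :
    ∃ T U : Polynomial (PowerSeries R),
      Polynomial.derivative P * Q = T + Polynomial.C (PowerSeries.X ^ (2 * d)) * U ∧
      TD (d - 1) T ∧
      ∀ φ : PowerSeries R, F.eval φ = 0 → (Polynomial.derivative F).eval φ ≠ 0 →
        (Polynomial.derivative F).eval φ * eu R (T.eval φ) =
          T.eval φ * eu R ((Polynomial.derivative F).eval φ) := by
  obtain ⟨T, U, hTU, hTc⟩ := exists_trunc (2 * d) (Polynomial.derivative P * Q)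
  obtain ⟨S, V, hSV, hSc⟩ := exists_trunc (2 * d) (Em P * Q)
  have hT1 : TD (d - 1) T := by
    intro j k h
    rw [hTc]
    split_ifs with hk
    · exact hG j k hk h
    · rfl
  have hS1 : TD d S := by
    intro j k h
    rw [hSc]
    split_ifs with hk
    · exact hH j k hk h
    · rfl
  refine ⟨T, U, hTU, hT1, ?_⟩
  obtain ⟨U', hU'⟩ := Em_X_pow_mul (2 * d) U
  have hex : F * Em T - T * Em F - F * Polynomial.derivative S + S * Polynomial.derivative F
      = 0 := by
    have hTe : T = Polynomial.derivative P * Q - Polynomial.C (PowerSeries.X ^ (2 * d)) * U := by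
      rw [hTU]; ring
    have hSe : S = Em P * Q - Polynomial.C (PowerSeries.X ^ (2 * d)) * V := by
      rw [hSV]; ring
    refine eq_zero_of_TD (N := 2 * d - 1)
      (W := - F * U' + U * Em F + F * Polynomial.derivative V - V * Polynomial.derivative F) ?_ ?_
    · have e1 : d + (d - 1) = 2 * d - 1 := by omega
      have e2 : (d - 1) + d = 2 * d - 1 := by omega
      have t1 := hT.mul hT1.em
      have t2 := hT1.mul hT.em
      have t3 := hT.mul hS1.deriv
      have t4 := hS1.mul hT.deriv
      rw [e1] at t1 t3 t4
      rw [e2] at t2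
      exact ((t1.sub t2).sub t3).add t4
    · have e : 2 * d - 1 + 1 = 2 * d := by omega
      rw [e]
      have h1 : Em T = Em (Polynomial.derivative P * Q)
          - Polynomial.C (PowerSeries.X ^ (2 * d)) * U' := by
        rw [hTe, Em_sub, hU']
      have h2 : Polynomial.derivative S = Polynomial.derivative (Em P * Q)
          - Polynomial.C (PowerSeries.X ^ (2 * d)) * Polynomial.derivative V := by
        rw [hSe, Polynomial.derivative_sub, Polynomial.derivative_C_mul]
      rw [h1, h2, hTe, hSe, Em_mul, Em_derivative, Polynomial.derivative_mul, hF, Em_mul,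
        Polynomial.derivative_mul]
      ring
  intro φ h0 hne
  have hEF := eu_eval F φ
  rw [h0, map_zero] at hEF
  have a1 := congrArg (Polynomial.eval φ) hex
  simp only [Polynomial.eval_add, Polynomial.eval_sub, Polynomial.eval_mul, h0,
    Polynomial.eval_zero, zero_mul] at a1
  have hS : S.eval φ = - (T.eval φ * eu R φ) := by
    apply mul_right_cancel₀ hne
    linear_combination a1 - T.eval φ * hEF
  have a2 := congrArg (fun p => Polynomial.eval φ (Polynomial.derivative p)) hex
  simp only [Polynomial.derivative_add, Polynomial.derivative_sub, Polynomial.derivative_mul,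
    Polynomial.eval_add, Polynomial.eval_sub, Polynomial.eval_mul, h0,
    Polynomial.derivative_zero, Polynomial.eval_zero, zero_mul] at a2
  rw [eu_eval, eu_eval, Em_derivative]
  rw [hS] at a2
  linear_combination a2 - (Polynomial.derivative T).eval φ * hEF

lemma series_vanish {R : Type*} [CommRing R] [IsDomain R] (M : ℕ)
    (hM : ∀ k : ℕ, 1 ≤ k → k ≤ M → (k : R) ≠ 0) (w δ : PowerSeries R)
    (hw : PowerSeries.coeff 0 w ≠ 0) (hδ : PowerSeries.coeff 0 δ = 0)
    (h : w * eu R δ = δ * eu R w) : ∀ k, k ≤ M → PowerSeries.coeff k δ = 0 := by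
  intro k
  induction k using Nat.strong_induction_on with
  | _ k ih =>
    intro hk
    rcases Nat.eq_zero_or_pos k with rfl | hpos
    · exact hδ
    have hc := congrArg (PowerSeries.coeff k) h
    rw [PowerSeries.coeff_mul, PowerSeries.coeff_mul,
      Finset.sum_eq_single (0, k), Finset.sum_eq_zero] at hc
    · rw [coeff_eu] at hc
      have := (mul_eq_zero.mp hc).resolve_left hw
      exact (mul_eq_zero.mp this).resolve_left (hM k hpos hk)
    · intro x hx
      rw [Finset.HasAntidiagonal.mem_antidiagonal] at hx
      by_cases h2 : x.2 = 0
      · rw [coeff_eu, h2]; simp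
      · rw [ih x.1 (by omega) (by omega), zero_mul]
    · intro x hx hne
      rw [Finset.HasAntidiagonal.mem_antidiagonal] at hx
      have : x.1 ≠ 0 := by
        intro h0
        apply hne
        ext <;> simp <;> omega
      rw [coeff_eu, ih x.2 (by omega) (by omega), mul_zero, mul_zero]
    · intro hx
      simp at hx

lemma natDegree_resultant_le {R : Type*} [CommRing R] [IsDomain R] (m n : ℕ)
    (F B : Polynomial (Polynomial R))
    (hF : ∀ j k, m < j + k → (F.coeff j).coeff k = 0)
    (hB : ∀ j k, n < j + k → (B.coeff j).coeff k = 0) :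
    (Polynomial.resultant F B m n).natDegree ≤ m * n := by
  classical
  by_cases h0 : Polynomial.resultant F B m n = 0
  · rw [h0]; simp
  let M : Matrix (Fin (m + n)) (Fin (m + n)) (Polynomial R) := Polynomial.sylvester F B m n
  let c : Fin (m + n) → ℕ := fun j => j.addCases (fun j₁ : Fin m => n + j₁) (fun j₁ : Fin n => m + j₁)
  have hent : ∀ i j : Fin (m + n), ((Polynomial.X : Polynomial R) ^ (i : ℕ) * M i j).natDegree ≤ c j := by
    intro i j
    rw [Polynomial.natDegree_le_iff_coeff_eq_zero]
    intro N hN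
    rw [Polynomial.coeff_X_pow_mul']
    split_ifs with hi
    · refine j.addCases (fun j₁ => ?_) (fun j₁ => ?_) hN
      · intro hN
        simp only [M, c, Polynomial.sylvester, Matrix.of_apply, Fin.addCases_left] at hN ⊢
        split_ifs with hh
        · rw [Set.mem_Icc] at hh
          exact hB _ _ (by omega)
        · simp
      · intro hN
        simp only [M, c, Polynomial.sylvester, Matrix.of_apply, Fin.addCases_right] at hN ⊢
        split_ifs with hh
        · rw [Set.mem_Icc] at hh
          exact hF _ _ (by omega)
        · simp
    · rfl
  have hdet := Matrix.det_mul_column (fun i : Fin (m + n) => (Polynomial.X : Polynomial R) ^ (i : ℕ)) M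
  have hle : (Matrix.det (Matrix.of fun i j : Fin (m + n) =>
      (Polynomial.X : Polynomial R) ^ (i : ℕ) * M i j)).natDegree ≤ ∑ j, c j := by
    rw [Matrix.det_apply]
    refine Polynomial.natDegree_sum_le_of_forall_le _ _ fun σ _ => ?_
    refine (Polynomial.natDegree_smul_le _ _).trans ?_
    refine (Polynomial.natDegree_prod_le _ _).trans ?_
    exact Finset.sum_le_sum fun i _ => hent _ _
  have h0' : M.det ≠ 0 := h0
  rw [hdet, Finset.prod_pow_eq_pow_sum,
    Polynomial.natDegree_mul (pow_ne_zero _ Polynomial.X_ne_zero) h0',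
    Polynomial.natDegree_X_pow, Fin.sum_univ_add, Fin.sum_univ_add] at hle
  simp only [c, Fin.addCases_left, Fin.addCases_right, Finset.sum_add_distrib, Fin.val_castAdd,
    Fin.val_natAdd, Finset.sum_const, Finset.card_univ, Fintype.card_fin, smul_eq_mul] at hle
  change (M.det).natDegree ≤ _
  omega

lemma eq_zero_of_resultant {A : Type*} [CommRing A] [IsDomain A] [IsIntegrallyClosed A]
    (d : ℕ) (F B : Polynomial A) (hF : F.Monic) (hFd : F.natDegree = d) (hirr : Irreducible F)
    (hB : B.natDegree ≤ d - 1) (hd : 1 ≤ d)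
    (h : Polynomial.resultant F B d (d - 1) = 0) : B = 0 := by
  by_contra hne
  let L := FractionRing A
  let ι := algebraMap A L
  have hinj : Function.Injective ι := IsFractionRing.injective A L
  have hFL : Irreducible (F.map ι) :=
    (hF.irreducible_iff_irreducible_map_fraction_map (K := L)).1 hirr
  have hBne : B.map ι ≠ 0 := (Polynomial.map_ne_zero_iff hinj).2 hne
  have hBd : (B.map ι).natDegree = B.natDegree := Polynomial.natDegree_map_eq_of_injective hinj _
  have hFd' : (F.map ι).natDegree = d := by rw [hF.natDegree_map, hFd]
  have hnd : ¬ F.map ι ∣ B.map ι := by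
    intro hdv
    have := Polynomial.natDegree_le_of_dvd hdv hBne
    omega
  have hcop : IsCoprime (F.map ι) (B.map ι) := (hFL.coprime_iff_not_dvd).2 hnd
  have h1 := Polynomial.resultant_ne_zero _ _ hcop
  have h2 : Polynomial.resultant (F.map ι) (B.map ι) d (d - 1) = 0 := by
    rw [Polynomial.resultant_map_map, h, map_zero]
  obtain ⟨k, hk⟩ := Nat.exists_eq_add_of_le hB
  rw [hk, ← hBd, Polynomial.resultant_add_right_deg _ _ _ _ _ le_rfl] at h2
  rw [hFd'] at h1
  have h3 : (F.map ι).coeff d = 1 := by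
    have := (hF.map ι).coeff_natDegree
    rwa [hFd'] at this
  rw [h3, one_pow, one_mul] at h2
  exact h1 h2


lemma exists_lift {R : Type*} [CommRing R] {N : ℕ} {T : Polynomial (PowerSeries R)}
    (hT : TD N T) : ∃ T₀ : Polynomial (Polynomial R),
      T₀.map Polynomial.coeToPowerSeries.ringHom = T := by
  refine ⟨∑ j ∈ T.support, Polynomial.monomial j (PowerSeries.trunc (N + 1) (T.coeff j)), ?_⟩
  ext j k
  rw [Polynomial.coeff_map]
  simp only [Polynomial.finsetSum_coeff, Polynomial.coeff_monomial]
  rw [Finset.sum_ite_eq']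
  split_ifs with h
  · simp only [Polynomial.coeToPowerSeries.ringHom_apply, Polynomial.coeff_coe,
      PowerSeries.coeff_trunc]
    split_ifs with hk
    · rfl
    · rw [hT j k (by omega)]
  · rw [Polynomial.notMem_support_iff] at h
    simp [h]

lemma TD.natDegree_le {R : Type*} [CommRing R] {N : ℕ} {T : Polynomial (PowerSeries R)}
    (hT : TD N T) : T.natDegree ≤ N := by
  rw [Polynomial.natDegree_le_iff_coeff_eq_zero]
  intro j hj
  ext k
  rw [hT j k (by omega)]; simp

lemma coe_injective (R : Type*) [CommRing R] :
    Function.Injective (Polynomial.coeToPowerSeries.ringHom : Polynomial R →+* PowerSeries R) :=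
  fun a b h => by
    simpa using h

/-- A nontrivial factorization over power series which satisfies the degree conditions to
precision `2d` contradicts irreducibility. -/
lemma contra {R : Type*} [CommRing R] [IsDomain R] [IsIntegrallyClosed (Polynomial R)]
    {d : ℕ} (hd : 1 ≤ d)
    (hM : ∀ k : ℕ, 1 ≤ k → k ≤ d * (d - 1) → (k : R) ≠ 0)
    (F₀ : Polynomial (Polynomial R)) (hmon : F₀.Monic) (hnd : F₀.natDegree = d)
    (hirr : Irreducible F₀)
    (F P Q : Polynomial (PowerSeries R))
    (hF₀ : F₀.map Polynomial.coeToPowerSeries.ringHom = F)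
    (hF : F = P * Q) (hT : TD d F)
    (hG : ∀ j k, k < 2 * d → d - 1 < j + k →
      PowerSeries.coeff k ((Polynomial.derivative P * Q).coeff j) = 0)
    (hH : ∀ j k, k < 2 * d → d < j + k →
      PowerSeries.coeff k ((Em P * Q).coeff j) = 0)
    (φ₁ φ₂ : PowerSeries R) (h1 : P.eval φ₁ = 0) (h2 : Q.eval φ₂ = 0)
    (hw1 : PowerSeries.coeff 0 ((Polynomial.derivative F).eval φ₁) ≠ 0)
    (hw2 : PowerSeries.coeff 0 ((Polynomial.derivative F).eval φ₂) ≠ 0) : False := by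
  obtain ⟨T, U, hTU, hT1, hkey⟩ := key_exact hd F P Q hF hT hG hH
  obtain ⟨T₀, hT₀⟩ := exists_lift hT1
  set ι : Polynomial R →+* PowerSeries R := Polynomial.coeToPowerSeries.ringHom with hι
  have hιc : ∀ (p : Polynomial R) k, PowerSeries.coeff k (ι p) = p.coeff k := by
    intro p k
    simp [hι]
  set B₀ := T₀ - Polynomial.derivative F₀ with hB₀
  have hB : B₀.map ι = T - Polynomial.derivative F := by
    rw [hB₀, Polynomial.map_sub, hT₀, ← Polynomial.derivative_map, hF₀]
  have hBT : TD (d - 1) (T - Polynomial.derivative F) := hT1.sub hT.deriv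
  have hBnd : B₀.natDegree ≤ d - 1 := by
    have := hBT.natDegree_le
    rwa [← hB, Polynomial.natDegree_map_eq_of_injective (coe_injective R)] at this
  have hX : ∀ ψ : PowerSeries R, PowerSeries.coeff 0 (PowerSeries.X ^ (2 * d) * ψ) = 0 := by
    intro ψ
    rw [PowerSeries.coeff_X_pow_mul', if_neg (by omega)]
  have hd1 : T.eval φ₁ - (Polynomial.derivative F).eval φ₁
      = PowerSeries.X ^ (2 * d) * (- U.eval φ₁) := by
    have a := congrArg (Polynomial.eval φ₁) hTU
    simp only [Polynomial.eval_mul, Polynomial.eval_add, Polynomial.eval_C] at a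
    rw [hF, Polynomial.derivative_mul, Polynomial.eval_add, Polynomial.eval_mul,
      Polynomial.eval_mul, h1]
    linear_combination -a
  have hz1 : F.eval φ₁ = 0 := by rw [hF, Polynomial.eval_mul, h1, zero_mul]
  have hwne : (Polynomial.derivative F).eval φ₁ ≠ 0 := by
    intro h; rw [h] at hw1; simp at hw1
  have hk := hkey φ₁ hz1 hwne
  have hvan := series_vanish (d * (d - 1)) hM ((Polynomial.derivative F).eval φ₁)
    (T.eval φ₁ - (Polynomial.derivative F).eval φ₁) hw1 (by rw [hd1, hX])
    (by rw [map_sub]; linear_combination hk)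
  have hres : Polynomial.resultant F₀ B₀ d (d - 1) = 0 := by
    obtain ⟨p, q, -, -, hpq⟩ := Polynomial.exists_mul_add_mul_eq_C_resultant F₀ B₀
      (m := d) (n := d - 1) hnd.le hBnd (Or.inl (by omega))
    have hdeg := natDegree_resultant_le d (d - 1) F₀ B₀
      (by
        intro j k hjk
        rw [← hιc, ← Polynomial.coeff_map, hF₀]
        exact hT j k hjk)
      (by
        intro j k hjk
        rw [← hιc, ← Polynomial.coeff_map, hB]
        exact hBT j k hjk)
    have a := congrArg (fun x => Polynomial.eval φ₁ (Polynomial.map ι x)) hpq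
    simp only [Polynomial.map_add, Polynomial.map_mul, Polynomial.eval_add, Polynomial.eval_mul,
      hF₀, hB, hz1, zero_mul, zero_add, Polynomial.map_C, Polynomial.eval_C,
      Polynomial.eval_sub] at a
    ext k
    by_cases hk : k ≤ d * (d - 1)
    · rw [← hιc, ← a, PowerSeries.coeff_mul]
      rw [Polynomial.coeff_zero]
      refine Finset.sum_eq_zero fun x hx => ?_
      rw [Finset.HasAntidiagonal.mem_antidiagonal] at hx
      rw [hvan _ (by omega), zero_mul]
    · rw [Polynomial.coeff_zero]
      exact Polynomial.coeff_eq_zero_of_natDegree_lt (by omega)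
  have hB0 := eq_zero_of_resultant d F₀ B₀ hmon hnd hirr hBnd hd hres
  rw [hB0, Polynomial.map_zero] at hB
  have hTF : Polynomial.derivative F = T := (sub_eq_zero.mp hB.symm).symm
  apply hw2
  rw [hTF]
  have a := congrArg (Polynomial.eval φ₂) hTU
  simp only [Polynomial.eval_mul, Polynomial.eval_add, Polynomial.eval_C, h2, mul_zero] at a
  have : T.eval φ₂ = PowerSeries.X ^ (2 * d) * (- U.eval φ₂) := by linear_combination -a
  rw [this, hX]

lemma TD.sum {R ι : Type*} [CommRing R] (N : ℕ) (s : Finset ι)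
    (P : ι → Polynomial (PowerSeries R)) (h : ∀ i ∈ s, TD N (P i)) : TD N (∑ i ∈ s, P i) := by
  intro j k hjk
  rw [Polynomial.finsetSum_coeff, map_sum]
  exact Finset.sum_eq_zero fun i hi => h i hi j k hjk

lemma TD.C_C {R : Type*} [CommRing R] (r : R) : TD 0 (Polynomial.C (PowerSeries.C r)) := by
  intro j k hjk
  rw [Polynomial.coeff_C]
  split_ifs with h
  · rw [PowerSeries.coeff_C, if_neg (by omega)]
  · simp

lemma TD.X {R : Type*} [CommRing R] : TD 1 (Polynomial.X : Polynomial (PowerSeries R)) := by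
  intro j k hjk
  rw [Polynomial.coeff_X]
  split_ifs with h
  · rw [PowerSeries.coeff_one, if_neg (by omega)]
  · simp

lemma TD.C_X {R : Type*} [CommRing R] :
    TD 1 (Polynomial.C PowerSeries.X : Polynomial (PowerSeries R)) := by
  intro j k hjk
  rw [Polynomial.coeff_C]
  split_ifs with h
  · rw [PowerSeries.coeff_X, if_neg (by omega)]
  · simp

lemma TD.one {R : Type*} [CommRing R] : TD 0 (1 : Polynomial (PowerSeries R)) := by
  simpa using TD.C_C (1 : R)

lemma TD.pow {R : Type*} [CommRing R] {N : ℕ} {P : Polynomial (PowerSeries R)}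
    (h : TD N P) (n : ℕ) : TD (n * N) (P ^ n) := by
  induction n with
  | zero => simpa using TD.one
  | succ n ih => rw [pow_succ, Nat.succ_mul]; exact ih.mul h

lemma TD.prod {R ι : Type*} [CommRing R] (N : ι → ℕ) (s : Finset ι)
    (P : ι → Polynomial (PowerSeries R)) (h : ∀ i ∈ s, TD (N i) (P i)) :
    TD (∑ i ∈ s, N i) (∏ i ∈ s, P i) := by
  classical
  induction s using Finset.induction_on with
  | empty => simpa using TD.one
  | insert a s ha ih =>
    rw [Finset.prod_insert ha, Finset.sum_insert ha]
    exact (h a (by simp)).mul (ih fun i hi => h i (by simp [hi]))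

lemma TD.eval₂ {R K σ : Type*} [CommRing R] [CommRing K]
    (c : K →+* Polynomial (PowerSeries R)) (hc : ∀ x, TD 0 (c x))
    (g : σ → Polynomial (PowerSeries R)) (hg : ∀ v, TD 1 (g v)) (f : MvPolynomial σ K) :
    TD f.totalDegree (MvPolynomial.eval₂ c g f) := by
  rw [MvPolynomial.eval₂_eq]
  refine TD.sum _ _ _ fun m hm => ?_
  have h1 := TD.prod (fun i => m i * 1) m.support (fun i => g i ^ m i) (fun i _ => (hg i).pow _)
  refine ((hc _).mul h1).mono ?_
  have := MvPolynomial.le_totalDegree hm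
  simpa [Finsupp.sum] using this

lemma totalDegree_eval₂_le {K σ τ : Type*} [CommRing K]
    (g : σ → MvPolynomial τ K) (hg : ∀ v, (g v).totalDegree ≤ 1) (f : MvPolynomial σ K) :
    (MvPolynomial.eval₂ MvPolynomial.C g f).totalDegree ≤ f.totalDegree := by
  rw [MvPolynomial.eval₂_eq]
  refine totalDegree_finsetSum_le fun m hm => ?_
  refine (totalDegree_mul _ _).trans ?_
  rw [totalDegree_C, zero_add]
  refine (totalDegree_finsetProd _ _).trans ?_
  refine le_trans (Finset.sum_le_sum (g := fun i => m i) fun i _ => ?_) ?_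
  · refine (totalDegree_pow _ _).trans ?_
    have := hg i
    nlinarith
  · have := MvPolynomial.le_totalDegree hm
    simpa [Finsupp.sum] using this


/-- The generic line restriction `f(z₁t, …, zₙt, y)` in `K[z][t][y]`. -/
noncomputable def genPoly (K : Type*) [Field K] (n : ℕ) :
    MvPolynomial (Option (Fin n)) K →+* Polynomial (Polynomial (MvPolynomial (Fin n) K)) :=
  eval₂Hom ((Polynomial.C.comp Polynomial.C).comp MvPolynomial.C :
      K →+* Polynomial (Polynomial (MvPolynomial (Fin n) K)))
    (fun v : Option (Fin n) => v.elim Polynomial.X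
      (fun i => Polynomial.C (Polynomial.C (MvPolynomial.X i) * Polynomial.X)))

/-- The generic line restriction `f(z₁t, …, zₙt, y)` in `K[z]⟦t⟧[y]`. -/
noncomputable def genSer (K : Type*) [Field K] (n : ℕ) :
    MvPolynomial (Option (Fin n)) K →+* Polynomial (PowerSeries (MvPolynomial (Fin n) K)) :=
  eval₂Hom ((Polynomial.C.comp PowerSeries.C).comp MvPolynomial.C :
      K →+* Polynomial (PowerSeries (MvPolynomial (Fin n) K)))
    (fun v : Option (Fin n) => v.elim Polynomial.X
      (fun i => Polynomial.C (PowerSeries.C (MvPolynomial.X i) * PowerSeries.X)))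

lemma genPoly_map {K : Type*} [Field K] {n : ℕ} (f : MvPolynomial (Option (Fin n)) K) :
    (genPoly K n f).map Polynomial.coeToPowerSeries.ringHom = genSer K n f := by
  have : (Polynomial.mapRingHom Polynomial.coeToPowerSeries.ringHom).comp (genPoly K n)
      = genSer K n := by
    apply MvPolynomial.ringHom_ext
    · intro r
      simp [genPoly, genSer]
    · intro v
      cases v <;> simp [genPoly, genSer]
  exact congrArg (fun g => g f) this

lemma genPoly_one {K : Type*} [Field K] {n : ℕ} (f : MvPolynomial (Option (Fin n)) K) :
    (genPoly K n f).map (Polynomial.evalRingHom 1) = optionEquivLeft K (Fin n) f := by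
  have : (Polynomial.mapRingHom (Polynomial.evalRingHom 1)).comp (genPoly K n)
      = RingHomClass.toRingHom (optionEquivLeft K (Fin n)) := by
    apply MvPolynomial.ringHom_ext
    · intro r
      simp [genPoly, optionEquivLeft_C]
    · intro v
      cases v <;> simp [genPoly, optionEquivLeft_X_none, optionEquivLeft_X_some]
  exact congrArg (fun g => g f) this

lemma genSer_zero {K : Type*} [Field K] {n : ℕ} (f : MvPolynomial (Option (Fin n)) K) :
    (genSer K n f).map PowerSeries.constantCoeff = (atZero f).map MvPolynomial.C := by
  have : (Polynomial.mapRingHom PowerSeries.constantCoeff).comp (genSer K n)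
      = (Polynomial.mapRingHom MvPolynomial.C).comp
        ((atZero : MvPolynomial (Option (Fin n)) K →ₐ[K] _) : _ →+* _) := by
    apply MvPolynomial.ringHom_ext
    · intro r
      simp [genSer, atZero]
    · intro v
      cases v <;> simp [genSer, atZero]
  exact congrArg (fun g => g f) this

/-- The embedding of `K[x,y]` into `K⟦x⟧[y]`. -/
noncomputable def biv (K : Type*) [Field K] :
    MvPolynomial (Fin 2) K →+* Polynomial (PowerSeries K) :=
  eval₂Hom (Polynomial.C.comp PowerSeries.C)
    (fun v => if v = 0 then Polynomial.C PowerSeries.X else Polynomial.X)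

lemma genSer_eval {K : Type*} [Field K] {n : ℕ} (f : MvPolynomial (Option (Fin n)) K)
    (a : Fin n → K) :
    (genSer K n f).map (PowerSeries.map (MvPolynomial.eval a)) = biv K (restrictLine a f) := by
  have : (Polynomial.mapRingHom (PowerSeries.map (MvPolynomial.eval a))).comp (genSer K n)
      = (biv K).comp ((restrictLine a : MvPolynomial (Option (Fin n)) K →ₐ[K] _) : _ →+* _) := by
    apply MvPolynomial.ringHom_ext
    · intro r
      simp [genSer, biv, restrictLine]
    · intro v
      cases v <;> simp [genSer, biv, restrictLine]
  exact congrArg (fun g => g f) this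

lemma TD_genSer {K : Type*} [Field K] {n : ℕ} (f : MvPolynomial (Option (Fin n)) K) :
    TD f.totalDegree (genSer K n f) := by
  refine TD.eval₂ _ (fun x => TD.C_C _) _ (fun v => ?_) f
  cases v with
  | none => exact TD.X
  | some i =>
    change TD 1 (Polynomial.C (_ * _))
    rw [Polynomial.C_mul]
    simpa using (TD.C_C _).mul TD.C_X

lemma TD_biv {K : Type*} [Field K] (f : MvPolynomial (Fin 2) K) :
    TD f.totalDegree (biv K f) := by
  refine TD.eval₂ _ (fun x => TD.C_C _) _ (fun v => ?_) f
  split_ifs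
  · exact TD.C_X
  · exact TD.X

lemma WS.X_mul {σ K : Type*} [Field K] (i : σ) :
    WS (PowerSeries.C (MvPolynomial.X i) * PowerSeries.X : PowerSeries (MvPolynomial σ K)) := by
  intro k
  rw [PowerSeries.coeff_C_mul, PowerSeries.coeff_X]
  split_ifs with h
  · simp [h]
  · simp

lemma WD_genSer {K : Type*} [Field K] {n : ℕ} (f : MvPolynomial (Option (Fin n)) K) :
    WD (genSer K n f) := by
  induction f using MvPolynomial.induction_on with
  | C a => simpa [genSer] using WD.C (WS.C a)
  | add p q hp hq => rw [map_add]; exact hp.add hq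
  | mul_X p v hp =>
    rw [map_mul]
    refine hp.mul ?_
    cases v with
    | none => simpa [genSer] using WD.X
    | some i => simpa [genSer] using WD.C (WS.X_mul i)

lemma totalDegree_restrictLine {K : Type*} [Field K] {n : ℕ}
    (f : MvPolynomial (Option (Fin n)) K) (a : Fin n → K) :
    (restrictLine a f).totalDegree ≤ f.totalDegree := by
  have := totalDegree_eval₂_le
    (fun v : Option (Fin n) => v.elim (X 1 : MvPolynomial (Fin 2) K) (fun i => C (a i) * X 0))
    (fun v => ?_) f
  · rw [restrictLine, aeval_def, MvPolynomial.algebraMap_eq]; exact this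
  · cases v with
    | none => simp
    | some i =>
      refine (totalDegree_mul _ _).trans ?_
      simp

lemma genPoly_monic {K : Type*} [Field K] {n d : ℕ} (f : MvPolynomial (Option (Fin n)) K)
    (hdeg : f.totalDegree = d) (hm : ((optionEquivLeft K (Fin n)) f).Monic)
    (hn : ((optionEquivLeft K (Fin n)) f).natDegree = f.totalDegree) :
    (genPoly K n f).Monic ∧ (genPoly K n f).natDegree = d := by
  have hT := TD_genSer f
  rw [hdeg] at hT hn
  have hc : ∀ j k, d < j + k → ((genPoly K n f).coeff j).coeff k = 0 := by
    intro j k h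
    have := hT j k h
    rw [← genPoly_map, Polynomial.coeff_map] at this
    simpa using this
  have h1 : (genPoly K n f).natDegree ≤ d := by
    rw [Polynomial.natDegree_le_iff_coeff_eq_zero]
    intro j hj
    ext1 k
    rw [hc j k (by omega)]; simp
  have h2 : (genPoly K n f).coeff d = 1 := by
    have e : (genPoly K n f).coeff d = Polynomial.C (((genPoly K n f).coeff d).coeff 0) := by
      apply Polynomial.eq_C_of_natDegree_le_zero
      rw [Polynomial.natDegree_le_iff_coeff_eq_zero]
      intro k hk
      exact hc d k (by omega)
    have h3 := hm.coeff_natDegree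
    rw [hn, ← genPoly_one, Polynomial.coeff_map, e] at h3
    simp only [Polynomial.coe_evalRingHom, Polynomial.eval_C] at h3
    rw [e, h3, Polynomial.C_1]
  have h3 : (genPoly K n f).Monic := Polynomial.monic_of_natDegree_le_of_coeff_eq_one d h1 h2
  refine ⟨h3, le_antisymm h1 (Polynomial.le_natDegree_of_ne_zero ?_)⟩
  rw [h2]; exact one_ne_zero

lemma genPoly_irreducible {K : Type*} [Field K] {n : ℕ} (f : MvPolynomial (Option (Fin n)) K)
    (hirr : Irreducible f) (hm : (genPoly K n f).Monic) (hd : (genPoly K n f).natDegree ≠ 0) :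
    Irreducible (genPoly K n f) := by
  rw [hm.irreducible_iff_natDegree]
  have h1 : Irreducible (optionEquivLeft K (Fin n) f) :=
    (MulEquiv.irreducible_iff (optionEquivLeft K (Fin n)).toMulEquiv).2 hirr
  refine ⟨fun h => hd (by rw [h]; simp), fun A B hA hB hAB => ?_⟩
  have h2 := congrArg (Polynomial.map (Polynomial.evalRingHom 1)) hAB
  rw [Polynomial.map_mul, genPoly_one] at h2
  rcases h1.isUnit_or_isUnit h2.symm with h | h
  · left
    have := (hA.map (Polynomial.evalRingHom 1)).eq_one_of_isUnit h
    rw [← hA.natDegree_map (Polynomial.evalRingHom 1), this]; simp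
  · right
    have := (hB.map (Polynomial.evalRingHom 1)).eq_one_of_isUnit h
    rw [← hB.natDegree_map (Polynomial.evalRingHom 1), this]; simp

lemma atZero_pderiv {K : Type*} [Field K] {n : ℕ} (f : MvPolynomial (Option (Fin n)) K) :
    atZero (pderiv none f) = Polynomial.derivative (atZero f) := by
  induction f using MvPolynomial.induction_on with
  | C a => simp [atZero]
  | add p q hp hq => simp [hp, hq]
  | mul_X p v hp =>
    rw [Derivation.leibniz]
    simp only [smul_eq_mul, map_add, map_mul, hp, Polynomial.derivative_mul]
    cases v with
    | none => simp [atZero]; ring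
    | some i => simp [atZero]

lemma resultant_root {K : Type*} [Field K] (g h : Polynomial K) (c : K) (hg : g.eval c = 0)
    (hh : h.eval c = 0) (hpos : 0 < g.natDegree) : resultant g h = 0 := by
  unfold resultant
  rw [← Matrix.exists_vecMul_eq_zero_iff]
  refine ⟨fun i => c ^ (i : ℕ), ?_, ?_⟩
  · intro h0
    have := congrFun h0 ⟨0, by omega⟩
    simp at this
  · have key : ∀ (p : Polynomial K) (N s : ℕ), p.natDegree + s < N →
        ∑ i : Fin N, c ^ (i : ℕ) * (if s ≤ (i : ℕ) then p.coeff ((i : ℕ) - s) else 0)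
          = c ^ s * p.eval c := by
      intro p N s hN
      rw [Fin.sum_univ_eq_sum_range (fun i => c ^ i * (if s ≤ i then p.coeff (i - s) else 0))]
      obtain ⟨M, rfl⟩ := Nat.exists_eq_add_of_le (show s ≤ N by omega)
      rw [Finset.sum_range_add, Finset.sum_eq_zero, zero_add,
        Polynomial.eval_eq_sum_range' (n := M) (by omega), Finset.mul_sum]
      · refine Finset.sum_congr rfl fun i _ => ?_
        rw [if_pos (by omega), Nat.add_sub_cancel_left, pow_add]; ring
      · intro i hi
        rw [Finset.mem_range] at hi
        rw [if_neg (by omega), mul_zero]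
    ext j
    simp only [Matrix.vecMul, dotProduct, sylvesterMatrix, Matrix.of_apply, Pi.zero_apply]
    by_cases hj : (j : ℕ) < h.natDegree
    · simp only [if_pos hj]
      rw [key g _ _ (by omega), hg, mul_zero]
    · simp only [if_neg hj]
      rw [key h _ _ (by omega), hh, mul_zero]


lemma cc_eval {σ K : Type*} [Field K] {F : Polynomial (PowerSeries (MvPolynomial σ K))}
    {g : Polynomial K} (hg : F.map PowerSeries.constantCoeff = g.map MvPolynomial.C)
    {φ : PowerSeries (MvPolynomial σ K)} {c : K}
    (hφ : PowerSeries.constantCoeff φ = MvPolynomial.C c) :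
    PowerSeries.constantCoeff (F.eval φ) = MvPolynomial.C (g.eval c) := by
  rw [← Polynomial.eval₂_hom, ← Polynomial.eval_map, hg, hφ, Polynomial.eval_map,
    Polynomial.eval₂_hom]

lemma map_derivative_cc {σ K : Type*} [Field K] {F : Polynomial (PowerSeries (MvPolynomial σ K))}
    {g : Polynomial K} (hg : F.map PowerSeries.constantCoeff = g.map MvPolynomial.C) :
    (Polynomial.derivative F).map PowerSeries.constantCoeff
      = (Polynomial.derivative g).map MvPolynomial.C := by
  rw [← Polynomial.derivative_map, hg, Polynomial.derivative_map]

/-- Hensel lifting of a simple root. -/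
lemma exists_root {σ K : Type*} [Field K] {F : Polynomial (PowerSeries (MvPolynomial σ K))}
    {g : Polynomial K} (hg : F.map PowerSeries.constantCoeff = g.map MvPolynomial.C)
    (hF : F.Monic) {c : K} (h0 : g.eval c = 0) (h1 : (Polynomial.derivative g).eval c ≠ 0) :
    ∃ φ : PowerSeries (MvPolynomial σ K), F.eval φ = 0 ∧
      PowerSeries.constantCoeff φ = MvPolynomial.C c := by
  have hc : PowerSeries.constantCoeff
      (PowerSeries.C (MvPolynomial.C c) : PowerSeries (MvPolynomial σ K)) = MvPolynomial.C c := by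
    simp
  have a1 : F.eval (PowerSeries.C (MvPolynomial.C c)) ∈
      (Ideal.span {PowerSeries.X} : Ideal (PowerSeries (MvPolynomial σ K))) := by
    rw [Ideal.mem_span_singleton, PowerSeries.X_dvd_iff, cc_eval hg hc, h0, map_zero]
  have a2 : IsUnit ((Polynomial.derivative F).eval (PowerSeries.C (MvPolynomial.C c))) := by
    rw [PowerSeries.isUnit_iff_constantCoeff, cc_eval (map_derivative_cc hg) hc]
    exact (isUnit_iff_ne_zero.2 h1).map MvPolynomial.C
  obtain ⟨φ, hr, hφ⟩ := HenselianRing.is_henselian F hF _ a1 (a2.map _)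
  refine ⟨φ, hr, ?_⟩
  rw [Ideal.mem_span_singleton, PowerSeries.X_dvd_iff, map_sub, hc, sub_eq_zero] at hφ
  exact hφ

/-- The Hensel root has coefficients of controlled degree. -/
lemma WS_root {σ K : Type*} [Field K] {F : Polynomial (PowerSeries (MvPolynomial σ K))}
    {g : Polynomial K} (hg : F.map PowerSeries.constantCoeff = g.map MvPolynomial.C)
    (hW : WD F) {c : K} (h1 : (Polynomial.derivative g).eval c ≠ 0)
    {φ : PowerSeries (MvPolynomial σ K)} (hr : F.eval φ = 0)
    (hφ : PowerSeries.constantCoeff φ = MvPolynomial.C c) : WS φ := by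
  intro k
  induction k using Nat.strong_induction_on with
  | _ k ih =>
  rcases Nat.eq_zero_or_pos k with rfl | hk
  · rw [PowerSeries.coeff_zero_eq_constantCoeff_apply, hφ]; simp
  set ψ : PowerSeries (MvPolynomial σ K) :=
    PowerSeries.mk (fun j => if j < k then PowerSeries.coeff j φ else 0) with hψ
  set u : PowerSeries (MvPolynomial σ K) :=
    PowerSeries.mk (fun j => PowerSeries.coeff (j + k) φ) with hu
  have e : φ = ψ + PowerSeries.X ^ k * u := by
    ext1 j
    rw [map_add, PowerSeries.coeff_X_pow_mul', hψ, PowerSeries.coeff_mk]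
    by_cases hj : j < k
    · rw [if_pos hj, if_neg (by omega), add_zero]
    · rw [if_neg hj, if_pos (by omega), zero_add, hu, PowerSeries.coeff_mk,
        Nat.sub_add_cancel (by omega)]
  have hWψ : WS ψ := by
    intro j
    rw [hψ, PowerSeries.coeff_mk]
    split_ifs with hj
    · exact ih j hj
    · simp
  have hψ0 : PowerSeries.constantCoeff ψ = MvPolynomial.C c := by
    rw [← PowerSeries.coeff_zero_eq_constantCoeff_apply, hψ, PowerSeries.coeff_mk, if_pos hk,
      PowerSeries.coeff_zero_eq_constantCoeff_apply, hφ]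
  obtain ⟨w, hw⟩ := Polynomial.binomExpansion F ψ (PowerSeries.X ^ k * u)
  rw [← e, hr] at hw
  have h2 := congrArg (PowerSeries.coeff k) hw
  have e1 : (Polynomial.derivative F).eval ψ * (PowerSeries.X ^ k * u)
      = PowerSeries.X ^ k * ((Polynomial.derivative F).eval ψ * u) := by ring
  have e2 : w * (PowerSeries.X ^ k * u) ^ 2
      = PowerSeries.X ^ k * (PowerSeries.X ^ k * (w * u ^ 2)) := by ring
  rw [map_add, map_add, e1, e2, PowerSeries.coeff_X_pow_mul', PowerSeries.coeff_X_pow_mul',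
    if_pos le_rfl, if_pos le_rfl, Nat.sub_self, PowerSeries.coeff_X_pow_mul', if_neg (by omega),
    PowerSeries.coeff_zero_eq_constantCoeff_apply, map_mul,
    cc_eval (map_derivative_cc hg) hψ0, map_zero, add_zero,
    ← PowerSeries.coeff_zero_eq_constantCoeff_apply u, hu, PowerSeries.coeff_mk, zero_add] at h2
  have h3 : PowerSeries.coeff k φ
      = MvPolynomial.C (-((Polynomial.derivative g).eval c)⁻¹)
        * PowerSeries.coeff k (F.eval ψ) := by
    have h4 : MvPolynomial.C (((Polynomial.derivative g).eval c)⁻¹)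
      * MvPolynomial.C ((Polynomial.derivative g).eval c) = (1 : MvPolynomial σ K) := by
      rw [← C_mul, inv_mul_cancel₀ h1, C_1]
    rw [C_neg]
    linear_combination (-PowerSeries.coeff k φ) * h4
      + (-MvPolynomial.C (((Polynomial.derivative g).eval c)⁻¹)) * h2
  rw [h3]
  refine (totalDegree_mul _ _).trans ?_
  rw [totalDegree_C, zero_add]
  exact hW.eval hWψ k

/-- Complete factorization of `F` over power series. -/
lemma exists_roots {σ K : Type*} [Field K] [IsAlgClosed K]
    {F : Polynomial (PowerSeries (MvPolynomial σ K))}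
    {g : Polynomial K} (hg : F.map PowerSeries.constantCoeff = g.map MvPolynomial.C)
    (hF : F.Monic) (hW : WD F) {d : ℕ} (hd : F.natDegree = d)
    (hs : ∀ c, g.eval c = 0 → (Polynomial.derivative g).eval c ≠ 0) :
    ∃ φ : Fin d → PowerSeries (MvPolynomial σ K),
      F = ∏ i, (Polynomial.X - Polynomial.C (φ i)) ∧ (∀ i, WS (φ i)) ∧
      ∀ i, PowerSeries.coeff 0 ((Polynomial.derivative F).eval (φ i)) ≠ 0 := by
  have hgm : g.Monic := by
    have : (g.map (MvPolynomial.C : K →+* MvPolynomial σ K)).Monic := by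
      rw [← hg]; exact hF.map _
    exact Polynomial.monic_of_injective (MvPolynomial.C_injective σ K) this
  have hgd : g.natDegree = d := by
    rw [← hgm.natDegree_map (MvPolynomial.C : K →+* MvPolynomial σ K), ← hg, hF.natDegree_map, hd]
  have hcard : g.roots.card = d := by
    rw [← hgd]; exact (IsAlgClosed.splits g).natDegree_eq_card_roots.symm
  have hnd : g.roots.Nodup := by
    classical
    rw [Multiset.nodup_iff_count_le_one]
    intro c
    rw [Polynomial.count_roots]
    by_contra hlt
    push Not at hlt
    rw [Polynomial.one_lt_rootMultiplicity_iff_isRoot hgm.ne_zero] at hlt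
    exact hs c hlt.1 hlt.2
  have hlen : g.roots.toList.length = d := by rw [Multiset.length_toList, hcard]
  have hndl : g.roots.toList.Nodup := by
    rw [← Multiset.coe_nodup, Multiset.coe_toList]; exact hnd
  set c : Fin d → K := fun i => g.roots.toList.get (i.cast hlen.symm) with hc
  have hcinj : Function.Injective c := by
    intro i j hij
    have := (List.nodup_iff_injective_get.1 hndl) hij
    simpa using this
  have hroot : ∀ i, g.eval (c i) = 0 := by
    intro i
    have : c i ∈ g.roots := by
      rw [← Multiset.mem_toList]; exact List.get_mem _ _
    exact (Polynomial.mem_roots'.1 this).2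
  choose φ h1 h2 using fun i => exists_root hg hF (hroot i) (hs _ (hroot i))
  refine ⟨φ, ?_, fun i => WS_root hg hW (hs _ (hroot i)) (h1 i) (h2 i), fun i => ?_⟩
  · have hPm : (∏ i, (Polynomial.X - Polynomial.C (φ i))).Monic :=
      Polynomial.monic_prod_X_sub_C φ Finset.univ
    have hdvd : (∏ i, (Polynomial.X - Polynomial.C (φ i))) ∣ F := by
      apply Finset.prod_dvd_of_coprime
      · intro i _ j _ hij
        apply Polynomial.isCoprime_X_sub_C_of_isUnit_sub
        rw [PowerSeries.isUnit_iff_constantCoeff, map_sub, h2, h2, ← C_sub]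
        exact (isUnit_iff_ne_zero.2 (sub_ne_zero.2 fun h => hij (hcinj h))).map MvPolynomial.C
      · intro i _
        rw [Polynomial.dvd_iff_isRoot]; exact h1 i
    refine (Polynomial.eq_of_dvd_of_natDegree_le_of_leadingCoeff hdvd ?_ ?_).symm
    · rw [hd, Polynomial.natDegree_finsetProd_X_sub_C_eq_card]
      simp
    · rw [hPm.leadingCoeff, hF.leadingCoeff]
  · rw [PowerSeries.coeff_zero_eq_constantCoeff_apply, cc_eval (map_derivative_cc hg) (h2 i)]
    intro h0
    exact hs _ (hroot i) (MvPolynomial.C_injective σ K (by rw [h0, map_zero]))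

lemma Em_map {R S : Type*} [CommRing R] [CommRing S] (g : R →+* S)
    (P : Polynomial (PowerSeries R)) :
    Em (P.map (PowerSeries.map g)) = (Em P).map (PowerSeries.map g) := by
  ext j k
  simp only [coeff_Em, Polynomial.coeff_map, coeff_eu, PowerSeries.coeff_map, map_mul, map_natCast]

lemma Em_C_C {R : Type*} [CommRing R] (r : R) :
    Em (Polynomial.C (PowerSeries.C r)) = 0 := by
  ext j k
  rw [coeff_Em, coeff_eu, Polynomial.coeff_C]
  split_ifs with h
  · rw [PowerSeries.coeff_C]
    split_ifs with h2
    · simp [h2]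
    · simp
  · simp

lemma factor_const {K : Type*} [Field K] {N : ℕ} {A b P : Polynomial (PowerSeries K)}
    (hb : b.natDegree = 0) (hP : P.Monic) (hN : P.natDegree = N) (h : A = b * P) (hT : TD N A) :
    ∃ r : K, b = Polynomial.C (PowerSeries.C r) := by
  obtain ⟨β, rfl⟩ : ∃ β, b = Polynomial.C β := ⟨_, Polynomial.eq_C_of_natDegree_eq_zero hb⟩
  refine ⟨PowerSeries.coeff 0 β, ?_⟩
  congr 1
  ext k
  rw [PowerSeries.coeff_C]
  split_ifs with hk
  · rw [hk]
  · have := hT N k (by omega)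
    rw [h, Polynomial.coeff_C_mul, ← hN, hP.coeff_natDegree, mul_one] at this
    exact this

lemma bad_split {K : Type*} [Field K] {d : ℕ} (hd : 1 ≤ d) (p : MvPolynomial (Fin 2) K)
    (htd : p.totalDegree ≤ d) (φ : Fin d → PowerSeries K)
    (h : biv K p = ∏ i, (Polynomial.X - Polynomial.C (φ i))) (hirr : ¬ Irreducible p) :
    ∃ t : Finset (Fin d), t.Nonempty ∧ tᶜ.Nonempty ∧
      TD (d - 1) (Polynomial.derivative (∏ i ∈ t, (Polynomial.X - Polynomial.C (φ i)))
        * ∏ i ∈ tᶜ, (Polynomial.X - Polynomial.C (φ i))) ∧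
      TD d (Em (R := K) (∏ i ∈ t, (Polynomial.X - Polynomial.C (φ i)))
        * ∏ i ∈ tᶜ, (Polynomial.X - Polynomial.C (φ i))) := by
  have hm : (biv K p).Monic := by rw [h]; exact Polynomial.monic_prod_X_sub_C φ Finset.univ
  have hdeg : (biv K p).natDegree = d := by
    rw [h, Polynomial.natDegree_finsetProd_X_sub_C_eq_card]; simp
  have hp0 : p ≠ 0 := by
    rintro rfl
    rw [map_zero] at hm
    exact hm.ne_zero rfl
  have hpu : ¬ IsUnit p := by
    intro hu
    have := hm.eq_one_of_isUnit (hu.map (biv K))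
    rw [this, Polynomial.natDegree_one] at hdeg
    omega
  obtain ⟨A, B, hAB, hA, hB⟩ : ∃ A B, p = A * B ∧ ¬ IsUnit A ∧ ¬ IsUnit B := by
    by_contra hcon
    push Not at hcon
    refine hirr ⟨hpu, fun A B hAB => ?_⟩
    by_contra h2
    push Not at h2
    exact h2.2 (hcon A B hAB h2.1)
  have hA0 : A ≠ 0 := by rintro rfl; simp [hAB] at hp0
  have hB0 : B ≠ 0 := by rintro rfl; simp [hAB] at hp0
  have hsum : A.totalDegree + B.totalDegree ≤ d := by
    rw [← totalDegree_mul_of_isDomain hA0 hB0, ← hAB]; exact htd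
  have hnu : ∀ A₁ : MvPolynomial (Fin 2) K, A₁ ≠ 0 → ¬ IsUnit A₁ → 0 < A₁.totalDegree := by
    intro A₁ h0 hu
    by_contra hz
    have := totalDegree_eq_zero_iff_eq_C.1 (Nat.eq_zero_of_not_pos hz)
    apply hu
    rw [this]
    refine IsUnit.map _ (isUnit_iff_ne_zero.2 fun hc => h0 ?_)
    rw [this, hc, map_zero]
  have hA1 := hnu A hA0 hA
  have hB1 := hnu B hB0 hB
  have hx : biv K A * biv K B = 1 * ∏ i, (Polynomial.X - Polynomial.C (φ i)) := by
    rw [one_mul, ← h, hAB, map_mul]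
  obtain ⟨t, u, b, c, htu, hdisj, hbc, hbt, hcu⟩ :=
    mul_eq_mul_prime_prod (fun i _ => Polynomial.prime_X_sub_C (φ i)) hx
  have hu : u = tᶜ := by
    ext i
    rw [Finset.mem_compl]
    constructor
    · exact fun hi ht => (Finset.disjoint_left.1 hdisj) ht hi
    · intro hi
      have : i ∈ t ∪ u := by rw [htu]; exact Finset.mem_univ i
      exact (Finset.mem_union.1 this).resolve_left hi
  subst hu
  set P := ∏ i ∈ t, (Polynomial.X - Polynomial.C (φ i)) with hP
  set Q := ∏ i ∈ tᶜ, (Polynomial.X - Polynomial.C (φ i)) with hQ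
  have hPm : P.Monic := Polynomial.monic_prod_X_sub_C φ t
  have hQm : Q.Monic := Polynomial.monic_prod_X_sub_C φ tᶜ
  have hPd : P.natDegree = t.card := Polynomial.natDegree_finsetProd_X_sub_C_eq_card _ _
  have hQd : Q.natDegree = tᶜ.card := Polynomial.natDegree_finsetProd_X_sub_C_eq_card _ _
  have hcard : t.card + tᶜ.card = d := by rw [Finset.card_add_card_compl]; simp
  have hb0 : b ≠ 0 := by rintro rfl; simp at hbc
  have hc0 : c ≠ 0 := by rintro rfl; simp at hbc
  have hbc' : b.natDegree = 0 ∧ c.natDegree = 0 := by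
    have := congrArg Polynomial.natDegree hbc
    rw [Polynomial.natDegree_mul hb0 hc0, Polynomial.natDegree_one] at this
    omega
  have hTA := TD_biv A
  have hTB := TD_biv B
  have hdA : t.card ≤ A.totalDegree := by
    have := hTA.natDegree_le
    rw [hbt, Polynomial.natDegree_mul hb0 hPm.ne_zero, hPd] at this
    omega
  have hdB : tᶜ.card ≤ B.totalDegree := by
    have := hTB.natDegree_le
    rw [hcu, Polynomial.natDegree_mul hc0 hQm.ne_zero, hQd] at this
    omega
  have hA2 : A.totalDegree = t.card := by omega
  have hB2 : B.totalDegree = tᶜ.card := by omega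
  rw [hA2] at hTA
  rw [hB2] at hTB
  obtain ⟨r, rfl⟩ := factor_const hbc'.1 hPm hPd hbt hTA
  refine ⟨t, Finset.card_pos.1 (by omega), Finset.card_pos.1 (by omega), ?_, ?_⟩
  · have e : Polynomial.derivative P * Q = Polynomial.derivative (biv K A) * biv K B := by
      rw [hbt, hcu, Polynomial.derivative_mul, Polynomial.derivative_C]
      linear_combination (Polynomial.derivative P * Q) * hbc
    rw [e]
    exact (hTA.deriv.mul hTB).mono (by omega)
  · have e : Em P * Q = Em (biv K A) * biv K B := by
      rw [hbt, hcu, Em_mul, Em_C_C]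
      linear_combination (Em P * Q) * hbc
    rw [e]
    exact (hTA.em.mul hTB).mono (by omega)

/-- As `bad_split`, with a chosen index avoided by the subset. -/
lemma bad_split' {K : Type*} [Field K] {d : ℕ} (hd : 1 ≤ d) (p : MvPolynomial (Fin 2) K)
    (htd : p.totalDegree ≤ d) (φ : Fin d → PowerSeries K)
    (h : biv K p = ∏ i, (Polynomial.X - Polynomial.C (φ i))) (hirr : ¬ Irreducible p)
    (i₀ : Fin d) :
    ∃ t : Finset (Fin d), t.Nonempty ∧ i₀ ∉ t ∧
      TD (d - 1) (Polynomial.derivative (∏ i ∈ t, (Polynomial.X - Polynomial.C (φ i)))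
        * ∏ i ∈ tᶜ, (Polynomial.X - Polynomial.C (φ i))) ∧
      TD d (Em (R := K) (∏ i ∈ t, (Polynomial.X - Polynomial.C (φ i)))
        * ∏ i ∈ tᶜ, (Polynomial.X - Polynomial.C (φ i))) := by
  obtain ⟨t, h1, h2, h3, h4⟩ := bad_split hd p htd φ h hirr
  by_cases hi : i₀ ∈ t
  · refine ⟨tᶜ, h2, by simpa using hi, ?_, ?_⟩ <;> rw [compl_compl]
    · have hF : TD (d - 1) (Polynomial.derivative (biv K p)) := ((TD_biv p).mono htd).deriv
      rw [h, ← Finset.prod_mul_prod_compl t, Polynomial.derivative_mul] at hF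
      convert hF.sub h3 using 1
      ring
    · have hF : TD d (Em (biv K p)) := ((TD_biv p).mono htd).em
      rw [h, ← Finset.prod_mul_prod_compl t, Em_mul] at hF
      convert hF.sub h4 using 1
      ring
  · exact ⟨t, h1, hi, h3, h4⟩

lemma exists_coeff {K : Type*} [Field K] {n d : ℕ} (hd : 1 ≤ d)
    (hchar : ringChar K = 0 ∨ d * (d - 1) < ringChar K)
    (f : MvPolynomial (Option (Fin n)) K)
    (hmon : (genPoly K n f).Monic) (hnd : (genPoly K n f).natDegree = d)
    (hirr : Irreducible (genPoly K n f)) (hdeg : f.totalDegree = d)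
    (φ : Fin d → PowerSeries (MvPolynomial (Fin n) K))
    (hF : genSer K n f = ∏ i, (Polynomial.X - Polynomial.C (φ i)))
    (hW : ∀ i, WS (φ i))
    (hs : ∀ i, PowerSeries.coeff 0 ((Polynomial.derivative (genSer K n f)).eval (φ i)) ≠ 0)
    (t : Finset (Fin d)) (h1 : t.Nonempty) (h2 : tᶜ.Nonempty) :
    ∃ q : MvPolynomial (Fin n) K, q ≠ 0 ∧ q.totalDegree ≤ 2 * d - 1 ∧
      ∀ a : Fin n → K,
        TD (d - 1) (Polynomial.derivative
            (∏ i ∈ t, (Polynomial.X - Polynomial.C (PowerSeries.map (eval a) (φ i))))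
          * ∏ i ∈ tᶜ, (Polynomial.X - Polynomial.C (PowerSeries.map (eval a) (φ i)))) →
        TD d (Em (R := K)
            (∏ i ∈ t, (Polynomial.X - Polynomial.C (PowerSeries.map (eval a) (φ i))))
          * ∏ i ∈ tᶜ, (Polynomial.X - Polynomial.C (PowerSeries.map (eval a) (φ i)))) →
        eval a q = 0 := by
  set P := ∏ i ∈ t, (Polynomial.X - Polynomial.C (φ i)) with hP
  set Q := ∏ i ∈ tᶜ, (Polynomial.X - Polynomial.C (φ i)) with hQ
  have hPW : WD P := WD.prod _ _ fun i => WD.X_sub_C (hW i)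
  have hQW : WD Q := WD.prod _ _ fun i => WD.X_sub_C (hW i)
  have hmapP : ∀ a : Fin n → K, P.map (PowerSeries.map (eval a))
      = ∏ i ∈ t, (Polynomial.X - Polynomial.C (PowerSeries.map (eval a) (φ i))) := by
    intro a
    rw [hP, Polynomial.map_prod]
    simp
  have hmapQ : ∀ a : Fin n → K, Q.map (PowerSeries.map (eval a))
      = ∏ i ∈ tᶜ, (Polynomial.X - Polynomial.C (PowerSeries.map (eval a) (φ i))) := by
    intro a
    rw [hQ, Polynomial.map_prod]
    simp
  by_contra hcon
  push Not at hcon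
  obtain ⟨i₁, hi₁⟩ := h1
  obtain ⟨i₂, hi₂⟩ := h2
  have hT := TD_genSer f
  rw [hdeg] at hT
  have hPQ : genSer K n f = P * Q := by rw [hF, hP, hQ, Finset.prod_mul_prod_compl]
  refine contra hd ?_ (genPoly K n f) hmon hnd hirr (genSer K n f) P Q (genPoly_map f) hPQ hT
    ?_ ?_ (φ i₁) (φ i₂) ?_ ?_ (hs i₁) (hs i₂)
  · intro k hk1 hk2 h0
    have h3 : (k : K) = 0 := by
      apply MvPolynomial.C_injective (Fin n) K
      rw [map_natCast, h0, map_zero]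
    rw [ringChar.spec] at h3
    rcases hchar with h | h
    · rw [h, zero_dvd_iff] at h3; omega
    · have := Nat.le_of_dvd (by omega) h3
      omega
  · intro j k hk hjk
    by_contra hne
    obtain ⟨a, ha1, ha2, ha3⟩ := hcon _ hne (((hPW.deriv.mul hQW) j k).trans (by omega))
    apply ha3
    rw [← hmapP, ← hmapQ, Polynomial.derivative_map, ← Polynomial.map_mul] at ha1
    have := ha1 j k hjk
    rwa [Polynomial.coeff_map, PowerSeries.coeff_map] at this
  · intro j k hk hjk
    by_contra hne
    obtain ⟨a, ha1, ha2, ha3⟩ := hcon _ hne (((hPW.em.mul hQW) j k).trans (by omega))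
    apply ha3
    rw [← hmapP, ← hmapQ, Em_map, ← Polynomial.map_mul] at ha2
    have := ha2 j k hjk
    rwa [Polynomial.coeff_map, PowerSeries.coeff_map] at this
  · rw [hP, Polynomial.eval_prod]
    exact Finset.prod_eq_zero hi₁ (by simp)
  · rw [hQ, Polynomial.eval_prod]
    exact Finset.prod_eq_zero hi₂ (by simp)

theorem main_result (K : Type) [Field K] [IsAlgClosed K] (n d : ℕ) (hd : 1 ≤ d)
    (hchar : ringChar K = 0 ∨ d * (d - 1) < ringChar K)
    (f : MvPolynomial (Option (Fin n)) K)
    (hirr : Irreducible f) (hdeg : f.totalDegree = d) (hH : SatisfiesHypH f) :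
    ∃ Q : Fin (2 ^ (d - 1) - 1) → MvPolynomial (Fin n) K,
      (∀ i, Q i ≠ 0 ∧ (Q i).totalDegree ≤ 2 * d - 1) ∧
      ∀ a : Fin n → K, ¬ Irreducible (restrictLine a f) →
        ∃ i, eval a (Q i) = 0 := by
  obtain ⟨hm, hn, hres⟩ := hH
  obtain ⟨hgm, hgd⟩ := genPoly_monic f hdeg hm hn
  have hgi := genPoly_irreducible f hirr hgm (by omega)
  have hFm : (genSer K n f).Monic := by rw [← genPoly_map]; exact hgm.map _
  have hFd : (genSer K n f).natDegree = d := by rw [← genPoly_map, hgm.natDegree_map, hgd]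
  have hg := genSer_zero f
  have hg0d : 0 < (atZero f).natDegree := by
    have h1 := congrArg Polynomial.natDegree hg
    rw [hFm.natDegree_map, hFd, Polynomial.natDegree_map_eq_of_injective
      (MvPolynomial.C_injective (Fin n) K)] at h1
    omega
  have hsimple : ∀ c, (atZero f).eval c = 0 → (Polynomial.derivative (atZero f)).eval c ≠ 0 := by
    intro c h1 h2
    apply hres
    rw [atZero_pderiv]
    exact resultant_root _ _ c h1 h2 hg0d
  obtain ⟨φ, hF, hW, hs⟩ := exists_roots hg hFm (WD_genSer f) hFd hsimple
  have hex := exists_coeff hd hchar f hgm hgd hgi hdeg φ hF hW hs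
  obtain ⟨e, rfl⟩ : ∃ e, d = e + 1 := ⟨d - 1, by omega⟩
  have hcardS : Fintype.card {S : Finset (Fin e) // S ≠ ∅} = 2 ^ (e + 1 - 1) - 1 := by
    rw [Fintype.card_subtype_compl]
    simp
  let ι := (Fintype.equivFinOfCardEq hcardS).symm
  have hsplit : ∀ S : {S : Finset (Fin e) // S ≠ ∅},
      (S.1.map Fin.castSuccEmb).Nonempty ∧ (S.1.map Fin.castSuccEmb)ᶜ.Nonempty := by
    intro S
    refine ⟨by rw [Finset.map_nonempty]; exact Finset.nonempty_iff_ne_empty.2 S.2,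
      ⟨Fin.last e, ?_⟩⟩
    simp [Fin.castSucc_ne_last]
  choose q hq0 hqd hqa using fun S : {S : Finset (Fin e) // S ≠ ∅} =>
    hex (S.1.map Fin.castSuccEmb) (hsplit S).1 (hsplit S).2
  refine ⟨fun i => q (ι i), fun i => ⟨hq0 _, hqd _⟩, fun a ha => ?_⟩
  have hbiv : biv K (restrictLine a f)
      = ∏ i, (Polynomial.X - Polynomial.C (PowerSeries.map (eval a) (φ i))) := by
    rw [← genSer_eval, hF, Polynomial.map_prod]
    simp
  obtain ⟨t, ht, hlast, hT1, hT2⟩ := bad_split' hd (restrictLine a f)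
    ((totalDegree_restrictLine f a).trans hdeg.le) _ hbiv ha (Fin.last e)
  obtain ⟨S, rfl⟩ : ∃ S : Finset (Fin e), t = S.map Fin.castSuccEmb := by
    refine ⟨Finset.univ.filter fun i => Fin.castSucc i ∈ t, ?_⟩
    ext i
    simp only [Finset.mem_map, Finset.mem_filter, Finset.mem_univ, true_and,
      Fin.coe_castSuccEmb]
    constructor
    · intro hi
      have hne : i ≠ Fin.last e := by rintro rfl; exact hlast hi
      exact ⟨i.castPred hne, by simpa using hi, by simp⟩
    · rintro ⟨j, hj, rfl⟩
      exact hj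
  have hS : S ≠ ∅ := by
    rintro rfl
    simp at ht
  refine ⟨ι.symm ⟨S, hS⟩, ?_⟩
  simp only [Equiv.apply_symm_apply]
  exact hqa ⟨S, hS⟩ a hT1 hT2

end Bertini

/-- **Covering the Bertinian bad points by few polynomials of degree `O(d)`.**
Let `d ≥ 1` and let `K` be an algebraically closed field whose characteristic is zero or
greater than `d(d−1)`. Let `f ∈ K[x₁,…,xₙ,y]` be irreducible of total degree `d`,
satisfying Hypothesis (H), and set `m = 2^(d−1) − 1`. Then there are nonzero polynomials
`Q₁,…,Q_m ∈ K[z₁,…,zₙ]` of total degree at most `2d−1` such that every Bertinian bad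
point `a ∈ Kⁿ` for `f` (i.e. every `a` for which `f(a₁x,…,aₙx,y)` is not irreducible)
is a zero of some `Qᵢ`. -/
theorem bertinian_bad_points_covered
    (K : Type) [Field K] [IsAlgClosed K] (n d : ℕ) (hd : 1 ≤ d)
    (hchar : ringChar K = 0 ∨ d * (d - 1) < ringChar K)
    (f : MvPolynomial (Option (Fin n)) K)
    (hirr : Irreducible f) (hdeg : f.totalDegree = d) (hH : SatisfiesHypH f) :
    ∃ Q : Fin (2 ^ (d - 1) - 1) → MvPolynomial (Fin n) K,
      (∀ i, Q i ≠ 0 ∧ (Q i).totalDegree ≤ 2 * d - 1) ∧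
      ∀ a : Fin n → K, ¬ Irreducible (restrictLine a f) →
        ∃ i, eval a (Q i) = 0 := by
  exact Bertini.main_result K n d hd hchar f hirr hdeg hH
end
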